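/- arXiv:1608.03861 — 6 statements merged into one kernel-verified Lean document; each statement's English description precedes it below -/
import Mathlib

section
/- For every x ∈ E, the proximal gradient step monotonically decreases the norm of the composite gradient mapping: ‖∇̃F(p(x))‖ ≤ ‖∇̃F(x)‖, i.e., L‖p(p(x)) − p(x)‖ ≤ L‖p(x) − x‖. -/
/-!
The proximal gradient map `p` is nonexpansive, and the theorem is nonexpansiveness at the pair
`p x`, `x`. Adding the first-order optimality conditions of two proximal steps, each tested at the
other's minimizer, makes `φ` cancel and bounds the distance of the minimizers by that of the
gradient steps `y - f' y / M`. A gradient step is nonexpansive as long as `f'` is `2 M`-Lipschitz,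
because the gradient of a convex function is cocoercive (Baillon–Haddad).
-/

open scoped RealInnerProductSpace

section NormedSpace

variable {E : Type*} [NormedAddCommGroup E] [NormedSpace ℝ E]

lemma fderiv_add_sub_nonneg_of_isMinOn_add {s : Set E} {h φ : E → ℝ} {h' : E →L[ℝ] ℝ} {b z : E}
    (hh : HasFDerivWithinAt h h' s b) (hφ : ConvexOn ℝ s φ)
    (hmin : IsMinOn (fun w => h w + φ w) s b) (hb : b ∈ s) (hz : z ∈ s) :
    0 ≤ h' (z - b) + (φ z - φ b) := by
  -- Convexity replaces `φ` by its chord, which is differentiable along the segment.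
  let k : ℝ → ℝ := fun t => h (AffineMap.lineMap b z t) + t * (φ z - φ b)
  have hmaps : Set.MapsTo (AffineMap.lineMap b z : ℝ → E) (Set.Icc 0 1) s :=
    fun t ht => hφ.1.lineMap_mem hb hz ht
  have hderiv : HasDerivWithinAt k (h' (z - b) + (φ z - φ b)) (Set.Icc 0 1) 0 := by
    have hline : HasDerivWithinAt (fun t : ℝ => h (AffineMap.lineMap b z t)) (h' (z - b))
        (Set.Icc 0 1) 0 :=
      HasFDerivWithinAt.comp_hasDerivWithinAt (t := s) 0 (by simpa using hh)
        AffineMap.hasDerivWithinAt_lineMap hmaps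
    simpa using hline.fun_add ((hasDerivWithinAt_id 0 _).mul_const (φ z - φ b))
  have hmin_chord : IsMinOn k (Set.Icc 0 1) 0 := fun t ht => by
    have hchord : φ (AffineMap.lineMap b z t) ≤ (1 - t) * φ b + t * φ z := by
      simpa only [AffineMap.lineMap_apply_module, smul_eq_mul] using
        hφ.2 hb hz (sub_nonneg.2 ht.2) ht.1 (sub_add_cancel 1 t)
    have hle : h b + φ b ≤ h (AffineMap.lineMap b z t) + φ (AffineMap.lineMap b z t) :=
      hmin (hmaps ht)
    simp only [Set.mem_ofPred_eq, k, AffineMap.lineMap_apply_zero]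
    linarith
  have hone : (1 : ℝ) ∈ posTangentConeAt (Set.Icc 0 1) (0 : ℝ) :=
    mem_posTangentConeAt_of_segment_subset (by simp [segment_eq_Icc])
  simpa using hmin_chord.localize.hasFDerivWithinAt_nonneg hderiv.hasFDerivWithinAt hone

lemma add_fderiv_sub_le_of_convexOn {s : Set E} {f : E → ℝ} {f' : E →L[ℝ] ℝ} {u v : E}
    (hf : ConvexOn ℝ s f) (hf' : HasFDerivWithinAt f f' s u) (hu : u ∈ s) (hv : v ∈ s) :
    f u + f' (v - u) ≤ f v := by
  -- Every point minimizes `-f + f = 0`.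
  have hopt := fderiv_add_sub_nonneg_of_isMinOn_add hf'.neg hf (fun w _ => by simp) hu hv
  rw [neg_apply] at hopt
  linarith

lemma le_add_fderiv_add_norm_sq {f : E → ℝ} {f' : E → E →L[ℝ] ℝ} {L : ℝ} {u : E}
    (hf' : ∀ z, HasFDerivAt f (f' z) z) (hLip : ∀ v, ‖f' v - f' u‖ ≤ L * ‖v - u‖) (w : E) :
    f (u + w) ≤ f u + f' u w + L / 2 * ‖w‖ ^ 2 := by
  let r : ℝ → ℝ := fun t => f (u + t • w) - t * f' u w - t ^ 2 * (L / 2 * ‖w‖ ^ 2)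
  have hr (t : ℝ) : HasDerivAt r ((f' (u + t • w) - f' u) w - t * (L * ‖w‖ ^ 2)) t := by
    have hline : HasDerivAt (fun t : ℝ => u + t • w) w t := by
      simpa using ((hasDerivAt_id t).smul_const w).const_add u
    refine ((((hf' (u + t • w)).comp_hasDerivAt t hline).sub
      ((hasDerivAt_id t).mul_const (f' u w))).sub
      ((hasDerivAt_pow 2 t).mul_const (L / 2 * ‖w‖ ^ 2))).congr_deriv ?_
    rw [sub_apply]
    ring
  have hr_nonpos (t : ℝ) (ht : 0 ≤ t) :
      (f' (u + t • w) - f' u) w - t * (L * ‖w‖ ^ 2) ≤ 0 := by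
    refine sub_nonpos.2 ?_
    calc (f' (u + t • w) - f' u) w
        ≤ ‖f' (u + t • w) - f' u‖ * ‖w‖ :=
          (le_abs_self _).trans ((f' (u + t • w) - f' u).le_opNorm w)
      _ ≤ L * ‖u + t • w - u‖ * ‖w‖ := by gcongr; exact hLip _
      _ = t * (L * ‖w‖ ^ 2) := by
          rw [add_sub_cancel_left, norm_smul, Real.norm_of_nonneg ht]
          ring
  have hanti : AntitoneOn r (Set.Ici 0) :=
    antitoneOn_of_hasDerivWithinAt_nonpos (convex_Ici 0)
      (fun t _ => (hr t).continuousAt.continuousWithinAt)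
      (fun t _ => (hr t).hasDerivWithinAt)
      (fun t ht => hr_nonpos t (interior_subset ht))
  have hle : r 1 ≤ r 0 := hanti Set.self_mem_Ici (Set.mem_Ici.2 zero_le_one) zero_le_one
  simp only [r, one_smul, zero_smul, add_zero] at hle
  linarith

end NormedSpace

section InnerProductSpace

variable {E : Type*} [NormedAddCommGroup E] [InnerProductSpace ℝ E]

section Gradient

variable {f : E → ℝ} {f' : E → E} {L : ℝ}

lemma add_inner_add_norm_sq_gradient_sub_le (hL : 0 < L) (hf : ConvexOn ℝ Set.univ f)
    (hf' : ∀ z, HasFDerivAt f (innerSL ℝ (f' z)) z)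
    (hLip : ∀ u v, ‖f' u - f' v‖ ≤ L * ‖u - v‖) (u v : E) :
    f u + ⟪f' u, v - u⟫ + ‖f' v - f' u‖ ^ 2 / (2 * L) ≤ f v := by
  set g := f' v - f' u with hg
  -- This step minimizes the quadratic upper bound at `v` minus the tangent lower bound at `u`.
  set w := -L⁻¹ • g with hw
  have htangent : f u + ⟪f' u, v + w - u⟫ ≤ f (v + w) :=
    add_fderiv_sub_le_of_convexOn hf (hf' u).hasFDerivWithinAt (Set.mem_univ u) (Set.mem_univ _)
  have hdescent : f (v + w) ≤ f v + ⟪f' v, w⟫ + L / 2 * ‖w‖ ^ 2 :=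
    le_add_fderiv_add_norm_sq hf' (fun z => by
      rw [← map_sub, innerSL_apply_norm]
      exact hLip z v) w
  have hsplit : ⟪f' u, v + w - u⟫ = ⟪f' u, v - u⟫ + ⟪f' u, w⟫ := by
    rw [add_sub_right_comm, inner_add_right]
  have hgain : ⟪f' v, w⟫ - ⟪f' u, w⟫ + L / 2 * ‖w‖ ^ 2 = -(‖g‖ ^ 2 / (2 * L)) := by
    rw [← inner_sub_left, ← hg, hw, real_inner_smul_right, real_inner_self_eq_norm_sq, norm_smul,
      norm_neg, norm_inv, Real.norm_of_nonneg hL.le]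
    field
  linarith

lemma norm_gradient_sub_sq_le_mul_inner (hL : 0 < L) (hf : ConvexOn ℝ Set.univ f)
    (hf' : ∀ z, HasFDerivAt f (innerSL ℝ (f' z)) z)
    (hLip : ∀ u v, ‖f' u - f' v‖ ≤ L * ‖u - v‖) (u v : E) :
    ‖f' u - f' v‖ ^ 2 ≤ L * ⟪f' u - f' v, u - v⟫ := by
  have huv := add_inner_add_norm_sq_gradient_sub_le hL hf hf' hLip u v
  have hvu := add_inner_add_norm_sq_gradient_sub_le hL hf hf' hLip v u
  have hsum : ‖f' u - f' v‖ ^ 2 / L ≤ ⟪f' u - f' v, u - v⟫ := by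
    rw [norm_sub_rev, ← neg_sub u v, inner_neg_right] at huv
    rw [inner_sub_left]
    linarith [show ‖f' u - f' v‖ ^ 2 / L = 2 * (‖f' u - f' v‖ ^ 2 / (2 * L)) by field]
  rwa [div_le_iff₀' hL] at hsum

lemma norm_smul_sub_sub_gradient_sub_le {M : ℝ} (hM : 0 < M) (hf : ConvexOn ℝ Set.univ f)
    (hf' : ∀ z, HasFDerivAt f (innerSL ℝ (f' z)) z)
    (hLip : ∀ u v, ‖f' u - f' v‖ ≤ 2 * M * ‖u - v‖) (u v : E) :
    ‖M • (u - v) - (f' u - f' v)‖ ≤ M * ‖u - v‖ := by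
  have hcoco := norm_gradient_sub_sq_le_mul_inner (by positivity) hf hf' hLip u v
  refine le_of_sq_le_sq ?_ (by positivity)
  rw [norm_sub_sq_real, norm_smul, Real.norm_of_nonneg hM.le, real_inner_smul_left,
    real_inner_comm]
  linarith

end Gradient

/-- The objective of a proximal step on `φ` from `y` with linear term `g` and step size `1 / M`.
The constant `c` does not affect the minimizers; with `c = f y` and `g = f' y` this is the model
minimized by the proximal gradient map. -/
noncomputable def proxModel (M : ℝ) (φ : E → ℝ) (c : ℝ) (g y z : E) : ℝ :=
  c + ⟪g, z - y⟫ + M / 2 * ‖z - y‖ ^ 2 + φ z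

variable {M : ℝ} {φ : E → ℝ}

lemma inner_add_sub_nonneg_of_isMinOn_proxModel {c : ℝ} {g y b : E}
    (hφ : ConvexOn ℝ Set.univ φ) (hb : IsMinOn (proxModel M φ c g y) Set.univ b) (z : E) :
    0 ≤ ⟪g + M • (b - y), z - b⟫ + (φ z - φ b) := by
  have hsmooth : HasFDerivAt (fun z => c + ⟪g, z - y⟫ + M / 2 * ‖z - y‖ ^ 2)
      (innerSL ℝ (g + M • (b - y))) b := by
    have hsub : HasFDerivAt (fun z => z - y) (ContinuousLinearMap.id ℝ E) b :=
      (hasFDerivAt_id b).sub_const y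
    refine ((((innerSL ℝ g).hasFDerivAt.comp b hsub).const_add c).add
      (hsub.norm_sq.const_mul (M / 2))).congr_fderiv ?_
    simp only [ContinuousLinearMap.comp_id, map_add, map_smul]
    module
  exact fderiv_add_sub_nonneg_of_isMinOn_add hsmooth.hasFDerivWithinAt hφ hb
    (Set.mem_univ b) (Set.mem_univ z)

lemma mul_norm_sub_le_of_isMinOn_proxModel {c₁ c₂ : ℝ} {g₁ g₂ y₁ y₂ b₁ b₂ : E}
    (hφ : ConvexOn ℝ Set.univ φ) (hb₁ : IsMinOn (proxModel M φ c₁ g₁ y₁) Set.univ b₁)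
    (hb₂ : IsMinOn (proxModel M φ c₂ g₂ y₂) Set.univ b₂) :
    M * ‖b₁ - b₂‖ ≤ ‖M • (y₁ - y₂) - (g₁ - g₂)‖ := by
  have hopt₁ := inner_add_sub_nonneg_of_isMinOn_proxModel hφ hb₁ b₂
  have hopt₂ := inner_add_sub_nonneg_of_isMinOn_proxModel hφ hb₂ b₁
  have hmono : M * ‖b₁ - b₂‖ ^ 2 ≤ ⟪M • (y₁ - y₂) - (g₁ - g₂), b₁ - b₂⟫ := by
    have hdiff : M • (y₁ - y₂) - (g₁ - g₂)
        = M • (b₁ - b₂) - (g₁ + M • (b₁ - y₁)) + (g₂ + M • (b₂ - y₂)) := by module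
    rw [hdiff, inner_add_left, inner_sub_left, real_inner_smul_left, real_inner_self_eq_norm_sq]
    rw [← neg_sub b₁ b₂, inner_neg_right] at hopt₁
    linarith
  rcases (norm_nonneg (b₁ - b₂)).eq_or_lt with hzero | hpos
  · rw [← hzero, mul_zero]
    exact norm_nonneg _
  · refine le_of_mul_le_mul_right ?_ hpos
    calc M * ‖b₁ - b₂‖ * ‖b₁ - b₂‖ = M * ‖b₁ - b₂‖ ^ 2 := by ring
      _ ≤ ⟪M • (y₁ - y₂) - (g₁ - g₂), b₁ - b₂⟫ := hmono
      _ ≤ ‖M • (y₁ - y₂) - (g₁ - g₂)‖ * ‖b₁ - b₂‖ := real_inner_le_norm _ _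

lemma norm_proxGrad_sub_le {f : E → ℝ} {f' p : E → E} (hM : 0 < M)
    (hf : ConvexOn ℝ Set.univ f) (hf' : ∀ z, HasFDerivAt f (innerSL ℝ (f' z)) z)
    (hLip : ∀ u v, ‖f' u - f' v‖ ≤ 2 * M * ‖u - v‖) (hφ : ConvexOn ℝ Set.univ φ)
    (hp : ∀ y, IsMinOn (proxModel M φ (f y) (f' y) y) Set.univ (p y)) (u v : E) :
    ‖p u - p v‖ ≤ ‖u - v‖ :=
  le_of_mul_le_mul_left ((mul_norm_sub_le_of_isMinOn_proxModel hφ (hp u) (hp v)).trans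
    (norm_smul_sub_sub_gradient_sub_le hM hf hf' hLip u v)) hM

end InnerProductSpace

theorem pgm_cgm_monotone_general
    {E : Type*} [NormedAddCommGroup E] [InnerProductSpace ℝ E]
    {L M : ℝ} (hM : 0 < M) (hLM : L ≤ 2 * M)
    {f : E → ℝ} {f' : E → E} {φ : E → ℝ}
    (hf : ConvexOn ℝ Set.univ f)
    (hf' : ∀ z : E, HasFDerivAt f (innerSL ℝ (f' z)) z)
    (hLip : ∀ u v : E, ‖f' u - f' v‖ ≤ L * ‖u - v‖)
    (hφ : ConvexOn ℝ Set.univ φ)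
    {p : E → E}
    (hp : ∀ y : E, IsMinOn
      (fun z => f y + ⟪f' y, z - y⟫ + M / 2 * ‖z - y‖ ^ 2 + φ z) Set.univ (p y))
    (x : E) :
    M * ‖p (p x) - p x‖ ≤ M * ‖p x - x‖ :=
  mul_le_mul_of_nonneg_left
    (norm_proxGrad_sub_le hM hf hf' (fun u v => (hLip u v).trans (by gcongr)) hφ hp (p x) x) hM.le

/-- the proximal gradient step monotonically decreases the norm of the
composite gradient mapping: `L‖p(p x) − p x‖ ≤ L‖p x − x‖`. -/
theorem pgm_cgm_monotone
    {E : Type*} [NormedAddCommGroup E] [InnerProductSpace ℝ E]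
    (L : ℝ) (hL : 0 < L)
    (f : E → ℝ) (f' : E → E) (φ : E → ℝ)
    (hf : ConvexOn ℝ Set.univ f)
    (hf' : ∀ z : E, HasFDerivAt f (innerSL ℝ (f' z)) z)
    (hLip : ∀ u v : E, ‖f' u - f' v‖ ≤ L * ‖u - v‖)
    (hφ : ConvexOn ℝ Set.univ φ)
    (p : E → E)
    (hp : ∀ y : E, IsMinOn
      (fun z => f y + ⟪f' y, z - y⟫ + L / 2 * ‖z - y‖ ^ 2 + φ z) Set.univ (p y))
    (x : E) :
    L * ‖p (p x) - p x‖ ≤ L * ‖p x - x‖ :=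
  pgm_cgm_monotone_general hL (by linarith) hf hf' hLip hφ hp x
end

section
/- Let the PGM iterates be x_{i+1} = p(x_i) for i = 0, …, N−1. Then for every N ≥ 2, ‖∇̃F(x_N)‖ = min_{0 ≤ i ≤ N} ‖∇̃F(x_i)‖ and ‖∇̃F(x_N)‖ ≤ 2LR / √((N−1)(N+2)). -/
/-!
Let `F = f + φ`. The optimality condition of the proximal step, the gradient inequality and the
descent lemma combine to `F (p y) + L/2 ‖z - p y‖² ≤ F z + L/2 ‖z - y‖²`. Adding this inequality
for `y = x k` and a fixed `z` to `k` times the same inequality for `y = z = x k` shows that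
`k (F (x k) - F z) + L/2 ∑_{i<k} i ‖x i - p (x i)‖² + L/2 ‖z - x k‖²` is nonincreasing in `k`; hence
`∑_{i≤N} i ‖x i - p (x i)‖² ≤ ‖x 0 - z‖²` as soon as `F z ≤ F (p (x N))`. On the other hand,
cocoercivity of `f'` makes `p` nonexpansive, so `‖x i - p (x i)‖` is nonincreasing and the sum is at
least `N (N + 1) / 2 * ‖x N - p (x N)‖²`.
-/

open scoped RealInnerProductSpace

section NormedSpace

variable {E : Type*} [NormedAddCommGroup E] [NormedSpace ℝ E] {s : Set E} {y z : E}

theorem norm_sub_sub_fderiv_le_of_lipschitz {G : Type*} [NormedAddCommGroup G] [NormedSpace ℝ G]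
    {f : E → G} {f' : E → E →L[ℝ] G} {L : ℝ} (hs : Convex ℝ s)
    (hf : ∀ u ∈ s, HasFDerivWithinAt f (f' u) s u) (hy : y ∈ s) (hz : z ∈ s)
    (hLip : ∀ u ∈ s, ‖f' u - f' y‖ ≤ L * ‖u - y‖) :
    ‖f z - f y - f' y (z - y)‖ ≤ L / 2 * ‖z - y‖ ^ 2 := by
  let γ : ℝ → E := AffineMap.lineMap y z
  have hγ_mem : Set.MapsTo γ (Set.Icc 0 1) s := fun t ht => hs.lineMap_mem hy hz ht
  have hremainder : ∀ t ∈ Set.Icc (0 : ℝ) 1,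
      HasDerivWithinAt (fun t => f (γ t) - f y - t • f' y (z - y))
        ((f' (γ t) - f' y) (z - y)) (Set.Icc 0 1) t := fun t ht => by
    have hline := (hf (γ t) (hγ_mem ht)).comp_hasDerivWithinAt t
      AffineMap.hasDerivAt_lineMap.hasDerivWithinAt hγ_mem
    exact ((hline.sub_const (f y)).sub
      ((hasDerivWithinAt_id t _).smul_const (f' y (z - y)))).congr_deriv (by simp)
  have hbound : ∀ t : ℝ, HasDerivAt (fun t => L / 2 * ‖z - y‖ ^ 2 * t ^ 2)
      (L * t * ‖z - y‖ ^ 2) t := fun t => by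
    refine ((hasDerivAt_pow 2 t).const_mul (L / 2 * ‖z - y‖ ^ 2)).congr_deriv ?_
    push_cast
    ring
  have hderiv_le : ∀ t ∈ Set.Ico (0 : ℝ) 1,
      ‖(f' (γ t) - f' y) (z - y)‖ ≤ L * t * ‖z - y‖ ^ 2 := fun t ht =>
    calc ‖(f' (γ t) - f' y) (z - y)‖
        ≤ ‖f' (γ t) - f' y‖ * ‖z - y‖ := ContinuousLinearMap.le_opNorm _ _
      _ ≤ L * ‖γ t - y‖ * ‖z - y‖ := by gcongr; exact hLip _ (hγ_mem ⟨ht.1, ht.2.le⟩)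
      _ = L * t * ‖z - y‖ ^ 2 := by
        have hγ_sub : γ t - y = t • (z - y) := AffineMap.lineMap_vsub_left y z t
        rw [hγ_sub, norm_smul, Real.norm_of_nonneg ht.1]
        ring
  simpa [γ] using image_norm_le_of_norm_deriv_right_le_deriv_boundary
    (fun t ht => (hremainder t ht).continuousWithinAt)
    (fun t ht => (hremainder t ⟨ht.1, ht.2.le⟩).mono_of_mem_nhdsWithin
      (Icc_mem_nhdsGE_of_mem ht))
    (by simp [γ]) hbound hderiv_le (Set.right_mem_Icc.2 zero_le_one)

theorem le_add_fderiv_of_isMinOn_add {h φ : E → ℝ} {h' : E →L[ℝ] ℝ} {q : E}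
    (hmin : IsMinOn (fun u => h u + φ u) s q) (hh : HasFDerivWithinAt h h' s q)
    (hφ : ConvexOn ℝ s φ) (hq : q ∈ s) (hz : z ∈ s) :
    φ q ≤ φ z + h' (z - q) := by
  let γ : ℝ → E := AffineMap.lineMap q z
  have hγ_mem : Set.MapsTo γ (Set.Icc 0 1) s := fun t ht => hφ.1.lineMap_mem hq hz ht
  let ψ : ℝ → ℝ := fun t => h (γ t) + AffineMap.lineMap (φ q) (φ z) t
  have hψ_min : IsMinOn ψ (Set.Icc 0 1) 0 := fun t ht => by
    have hchord : φ (γ t) ≤ AffineMap.lineMap (φ q) (φ z) t := by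
      have := hφ.2 hq hz (sub_nonneg.2 ht.2) ht.1 (sub_add_cancel 1 t)
      rwa [← AffineMap.lineMap_apply_module, ← AffineMap.lineMap_apply_module] at this
    calc ψ 0 = h q + φ q := by simp [ψ, γ]
      _ ≤ h (γ t) + φ (γ t) := hmin (hγ_mem ht)
      _ ≤ ψ t := by dsimp only [ψ]; gcongr
  have hψ_deriv : HasDerivWithinAt ψ (h' (z - q) + (φ z - φ q)) (Set.Icc 0 1) 0 := by
    refine HasDerivWithinAt.add ?_ AffineMap.hasDerivAt_lineMap.hasDerivWithinAt
    refine HasFDerivWithinAt.comp_hasDerivWithinAt (0 : ℝ) ?_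
      AffineMap.hasDerivAt_lineMap.hasDerivWithinAt hγ_mem
    simpa [γ] using hh
  have hcone : (1 : ℝ) ∈ posTangentConeAt (Set.Icc 0 1) 0 := by
    simpa using sub_mem_posTangentConeAt_of_segment_subset
      (segment_eq_Icc (zero_le_one (α := ℝ))).subset
  have hnonneg := hψ_min.localize.hasFDerivWithinAt_nonneg hψ_deriv.hasFDerivWithinAt hcone
  simp only [ContinuousLinearMap.toSpanSingleton_apply, one_smul] at hnonneg
  linarith

theorem add_fderiv_le_of_convexOn {f : E → ℝ} {f' : E →L[ℝ] ℝ} (hf : ConvexOn ℝ s f)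
    (hf' : HasFDerivWithinAt f f' s y) (hy : y ∈ s) (hz : z ∈ s) :
    f y + f' (z - y) ≤ f z := by
  -- `y` minimizes the zero function `-f + f`.
  have hmin : IsMinOn (fun u => -f u + f u) s y := by simp [isMinOn_iff]
  have := le_add_fderiv_of_isMinOn_add hmin hf'.neg hf hy hz
  rw [neg_apply] at this
  linarith

end NormedSpace

theorem antitone_dist_iterate_of_lipschitzWith_one {X : Type*} [PseudoMetricSpace X] {p : X → X}
    (hp : LipschitzWith 1 p) (x : X) : Antitone fun k => dist (p^[k] x) (p (p^[k] x)) :=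
  antitone_nat_of_succ_le fun k => by
    simpa [Function.iterate_succ_apply'] using hp.dist_le_mul (p^[k] x) (p (p^[k] x))

theorem mul_le_sum_range_mul_of_antitone {a : ℕ → ℝ} (ha : Antitone a) (N : ℕ) :
    (N : ℝ) * (N + 1) / 2 * a N ≤ ∑ i ∈ Finset.range (N + 1), i * a i := by
  have hsum : ∑ i ∈ Finset.range (N + 1), (i : ℝ) = N * (N + 1) / 2 := by
    have := congrArg (Nat.cast : ℕ → ℝ) (Finset.sum_range_id_mul_two (N + 1))
    push_cast [Nat.add_sub_cancel] at this
    linarith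
  rw [← hsum, Finset.sum_mul]
  gcongr with i hi
  exact ha (Finset.mem_range_succ_iff.1 hi)

theorem div_sqrt_le_two_mul_div_sqrt {c t : ℝ} (hc : 0 ≤ c) (ht : 1 < t) :
    c / √(t * (t + 1) / 2) ≤ 2 * c / √((t - 1) * (t + 2)) := by
  have hpos : 0 < (t - 1) * (t + 2) := mul_pos (by linarith) (by linarith)
  have hsqrt : √((t - 1) * (t + 2)) ≤ 2 * √(t * (t + 1) / 2) := by
    rw [Real.sqrt_le_left (by positivity), mul_pow, Real.sq_sqrt (by positivity)]
    nlinarith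
  calc c / √(t * (t + 1) / 2) = 2 * c / (2 * √(t * (t + 1) / 2)) :=
        (mul_div_mul_left _ _ two_ne_zero).symm
    _ ≤ 2 * c / √((t - 1) * (t + 2)) := by gcongr

section ProximalGradient

variable {E : Type*} [NormedAddCommGroup E] [InnerProductSpace ℝ E]
  {L : ℝ} {f φ : E → ℝ} {f' : E → E} {s : Set E} {p : E → E}

/-- `f` is convex and `L`-smooth with gradient `f'`. The gradient is encoded through `innerSL`
because `HasGradientAt` requires a complete space. -/
structure IsSmoothConvex (L : ℝ) (f : E → ℝ) (f' : E → E) : Prop where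
  convexOn : ConvexOn ℝ Set.univ f
  hasFDerivAt (u : E) : HasFDerivAt f (innerSL ℝ (f' u)) u
  norm_sub_le (u v : E) : ‖f' u - f' v‖ ≤ L * ‖u - v‖

namespace IsSmoothConvex

theorem add_inner_le (hf : IsSmoothConvex L f f') (y z : E) : f y + ⟪f' y, z - y⟫ ≤ f z :=
  add_fderiv_le_of_convexOn hf.convexOn (hf.hasFDerivAt y).hasFDerivWithinAt
    (Set.mem_univ y) (Set.mem_univ z)

theorem le_add_inner_add_sq (hf : IsSmoothConvex L f f') (y z : E) :
    f z ≤ f y + ⟪f' y, z - y⟫ + L / 2 * ‖z - y‖ ^ 2 := by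
  have hremainder := norm_sub_sub_fderiv_le_of_lipschitz (L := L) convex_univ
    (fun u _ => (hf.hasFDerivAt u).hasFDerivWithinAt) (Set.mem_univ y) (Set.mem_univ z)
    (fun u _ => by simpa only [← map_sub, innerSL_apply_norm] using hf.norm_sub_le u y)
  rw [innerSL_apply_apply] at hremainder
  linarith [Real.le_norm_self (f z - f y - ⟪f' y, z - y⟫)]

theorem add_inner_add_sq_le (hf : IsSmoothConvex L f f') (hL : 0 < L) (u v : E) :
    f u + ⟪f' u, v - u⟫ + ‖f' v - f' u‖ ^ 2 / (2 * L) ≤ f v := by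
  set g := f' v - f' u with hg
  -- `v - L⁻¹ • g` minimizes over `w` the quadratic upper model of `f` at `v` minus the affine
  -- lower model of `f` at `u`.
  have hlower := hf.add_inner_le u (v - L⁻¹ • g)
  have hupper := hf.le_add_inner_add_sq v (v - L⁻¹ • g)
  have hgap : L⁻¹ * ⟪f' v, g⟫ - L⁻¹ * ⟪f' u, g⟫ = L⁻¹ * ‖g‖ ^ 2 := by
    rw [← mul_sub, ← inner_sub_left, ← hg, real_inner_self_eq_norm_sq]
  rw [sub_right_comm, inner_sub_right, real_inner_smul_right] at hlower
  rw [sub_sub_cancel_left, inner_neg_right, real_inner_smul_right, norm_neg, norm_smul, mul_pow,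
    Real.norm_of_nonneg (inv_nonneg.2 hL.le)] at hupper
  have hcoeff : ‖g‖ ^ 2 / (2 * L) = L⁻¹ * ‖g‖ ^ 2 - L / 2 * (L⁻¹ ^ 2 * ‖g‖ ^ 2) := by
    field_simp
    ring
  linarith

theorem cocoercive (hf : IsSmoothConvex L f f') (hL : 0 < L) (u v : E) :
    ‖f' u - f' v‖ ^ 2 ≤ L * ⟪f' u - f' v, u - v⟫ := by
  have huv := hf.add_inner_add_sq_le hL u v
  have hvu := hf.add_inner_add_sq_le hL v u
  rw [norm_sub_rev, ← neg_sub u v, inner_neg_right] at huv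
  have hsum : ‖f' u - f' v‖ ^ 2 / L ≤ ⟪f' u - f' v, u - v⟫ := by
    rw [inner_sub_left]
    have : ‖f' u - f' v‖ ^ 2 / L = 2 * (‖f' u - f' v‖ ^ 2 / (2 * L)) := by field_simp
    linarith
  rwa [div_le_iff₀' hL] at hsum

theorem norm_smul_sub_sub_le (hf : IsSmoothConvex L f f') (hL : 0 < L) (u v : E) :
    ‖L • (u - v) - (f' u - f' v)‖ ≤ L * ‖u - v‖ := by
  refine (sq_le_sq₀ (norm_nonneg _) (by positivity)).1 ?_
  rw [norm_sub_sq_real, norm_smul, Real.norm_of_nonneg hL.le, real_inner_smul_left,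
    real_inner_comm]
  linarith [hf.cocoercive hL u v, sq_nonneg ‖f' u - f' v‖]

end IsSmoothConvex

/-- The model of `f + φ` around `y` that the proximal gradient step minimizes: `f` is replaced by
its linearization at `y` plus the quadratic `L / 2 * ‖z - y‖ ^ 2`. -/
noncomputable def proxGradModel (L : ℝ) (f : E → ℝ) (f' : E → E) (φ : E → ℝ) (y z : E) : ℝ :=
  f y + ⟪f' y, z - y⟫ + L / 2 * ‖z - y‖ ^ 2 + φ z

/-- `p` is a proximal gradient map for `f + φ` on `s`. The constraint set `s` plays the role of the
effective domain of an extended-valued `φ`. -/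
structure IsProxGradMap (L : ℝ) (f : E → ℝ) (f' : E → E) (φ : E → ℝ) (s : Set E) (p : E → E) :
    Prop where
  mem (y : E) : p y ∈ s
  isMinOn (y : E) : IsMinOn (proxGradModel L f f' φ y) s (p y)

namespace IsProxGradMap

theorem le_add_inner (hp : IsProxGradMap L f f' φ s p) (hφ : ConvexOn ℝ s φ) (y : E) {z : E}
    (hz : z ∈ s) : φ (p y) ≤ φ z + ⟪f' y + L • (p y - y), z - p y⟫ := by
  have hquad : HasFDerivAt (fun u => f y + ⟪f' y, u - y⟫ + L / 2 * ‖u - y‖ ^ 2)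
      (innerSL ℝ (f' y + L • (p y - y))) (p y) := by
    have hsub : HasFDerivAt (fun u => u - y) (ContinuousLinearMap.id ℝ E) (p y) :=
      (hasFDerivAt_id (p y)).sub_const y
    refine ((((innerSL ℝ (f' y)).hasFDerivAt.comp (p y) hsub).const_add (f y)).add
      (hsub.norm_sq.const_mul (L / 2))).congr_fderiv ?_
    ext w
    simp only [ContinuousLinearMap.comp_id, add_apply, smul_apply, coe_innerSL_apply,
      inner_sub_left, inner_add_left, real_inner_smul_left, nsmul_eq_mul, smul_eq_mul]
    push_cast
    ring
  exact le_add_fderiv_of_isMinOn_add (hp.isMinOn y) hquad.hasFDerivWithinAt hφ (hp.mem y) hz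

theorem add_sq_le (hp : IsProxGradMap L f f' φ s p) (hf : IsSmoothConvex L f f')
    (hφ : ConvexOn ℝ s φ) (y : E) {z : E} (hz : z ∈ s) :
    f (p y) + φ (p y) + L / 2 * ‖z - p y‖ ^ 2 ≤ f z + φ z + L / 2 * ‖z - y‖ ^ 2 := by
  have hoptimal := hp.le_add_inner hφ y hz
  have hlower := hf.add_inner_le y z
  have hupper := hf.le_add_inner_add_sq y (p y)
  rw [inner_add_left, real_inner_smul_left] at hoptimal
  rw [← sub_add_sub_cancel' (p y) y z, inner_add_right] at hlower
  rw [← sub_add_sub_cancel' (p y) y z, norm_add_sq_real]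
  linarith

theorem lipschitzWith_one (hp : IsProxGradMap L f f' φ s p) (hL : 0 < L)
    (hf : IsSmoothConvex L f f') (hφ : ConvexOn ℝ s φ) : LipschitzWith 1 p := by
  refine LipschitzWith.mk_one fun u v => ?_
  rw [dist_eq_norm, dist_eq_norm]
  have hmonotone : L * ‖p u - p v‖ ^ 2 ≤ ⟪L • (u - v) - (f' u - f' v), p u - p v⟫ := by
    have hu := hp.le_add_inner hφ u (hp.mem v)
    have hv := hp.le_add_inner hφ v (hp.mem u)
    rw [← neg_sub (p u) (p v), inner_neg_right] at hu
    rw [← real_inner_self_eq_norm_sq]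
    simp only [inner_sub_left, inner_add_left, real_inner_smul_left] at hu hv ⊢
    linarith
  have hcontract : L * ‖p u - p v‖ ^ 2 ≤ L * ‖u - v‖ * ‖p u - p v‖ :=
    calc L * ‖p u - p v‖ ^ 2
        ≤ ‖L • (u - v) - (f' u - f' v)‖ * ‖p u - p v‖ :=
          hmonotone.trans (real_inner_le_norm _ _)
      _ ≤ L * ‖u - v‖ * ‖p u - p v‖ := by gcongr; exact hf.norm_smul_sub_sub_le hL u v
  rcases (norm_nonneg (p u - p v)).eq_or_lt with hzero | hpos
  · rw [← hzero]
    exact norm_nonneg _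
  · rw [sq, ← mul_assoc] at hcontract
    exact le_of_mul_le_mul_left (le_of_mul_le_mul_right hcontract hpos) hL

theorem potential_le (hp : IsProxGradMap L f f' φ s p) (hf : IsSmoothConvex L f f')
    (hφ : ConvexOn ℝ s φ) (x : E) {z : E} (hz : z ∈ s) (k : ℕ) :
    k * (f (p^[k] x) + φ (p^[k] x) - (f z + φ z))
        + L / 2 * ∑ i ∈ Finset.range k, i * ‖p^[i] x - p (p^[i] x)‖ ^ 2
        + L / 2 * ‖z - p^[k] x‖ ^ 2 ≤ L / 2 * ‖z - x‖ ^ 2 := by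
  induction k with
  | zero => simp
  | succ k ih =>
    set y := p^[k] x with hy
    have hdescent : k * (f (p y) + φ (p y) + L / 2 * ‖y - p y‖ ^ 2) ≤ k * (f y + φ y) := by
      rcases k with _ | k
      · simp
      · have hy_mem : y ∈ s := by
          rw [hy, Function.iterate_succ_apply']
          exact hp.mem _
        refine mul_le_mul_of_nonneg_left ?_ (Nat.cast_nonneg _)
        simpa using hp.add_sq_le hf hφ y hy_mem
    rw [Finset.sum_range_succ, Function.iterate_succ_apply', ← hy]
    push_cast
    linarith [hp.add_sq_le hf hφ y hz]

theorem sum_mul_sq_le (hp : IsProxGradMap L f f' φ s p) (hL : 0 < L) (hf : IsSmoothConvex L f f')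
    (hφ : ConvexOn ℝ s φ) (x : E) {z : E} (hz : z ∈ s) (N : ℕ)
    (hle : f z + φ z ≤ f (p (p^[N] x)) + φ (p (p^[N] x))) :
    ∑ i ∈ Finset.range (N + 1), i * ‖p^[i] x - p (p^[i] x)‖ ^ 2 ≤ ‖x - z‖ ^ 2 := by
  have hpotential := hp.potential_le hf hφ x hz (N + 1)
  rw [Function.iterate_succ_apply', norm_sub_rev z x] at hpotential
  have hgap : 0 ≤ ((N + 1 : ℕ) : ℝ) *
      (f (p (p^[N] x)) + φ (p (p^[N] x)) - (f z + φ z)) :=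
    mul_nonneg (Nat.cast_nonneg _) (sub_nonneg.2 hle)
  have hdist : 0 ≤ L / 2 * ‖z - p (p^[N] x)‖ ^ 2 := by positivity
  exact le_of_mul_le_mul_left (by linarith) (half_pos hL)

theorem norm_sub_le_div_sqrt (hp : IsProxGradMap L f f' φ s p) (hL : 0 < L)
    (hf : IsSmoothConvex L f f') (hφ : ConvexOn ℝ s φ) (x : E) {z : E} (hz : z ∈ s) {N : ℕ}
    (hN : 0 < N) (hle : f z + φ z ≤ f (p (p^[N] x)) + φ (p (p^[N] x))) :
    ‖p^[N] x - p (p^[N] x)‖ ≤ ‖x - z‖ / √((N : ℝ) * (N + 1) / 2) := by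
  have hanti : Antitone fun k => ‖p^[k] x - p (p^[k] x)‖ ^ 2 := fun i j hij => by
    have := antitone_dist_iterate_of_lipschitzWith_one (hp.lipschitzWith_one hL hf hφ) x hij
    simp only [dist_eq_norm] at this
    exact pow_le_pow_left₀ (norm_nonneg _) this 2
  have hsq := (mul_le_sum_range_mul_of_antitone hanti N).trans
    (hp.sum_mul_sq_le hL hf hφ x hz N hle)
  rw [le_div_iff₀ (by positivity)]
  refine (sq_le_sq₀ (by positivity) (norm_nonneg _)).1 ?_
  rwa [mul_pow, Real.sq_sqrt (by positivity), mul_comm]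

end IsProxGradMap

theorem eq_iterate_of_forall_lt {X : Type*} {p : X → X} {x : ℕ → X} {N : ℕ}
    (hx : ∀ i < N, x (i + 1) = p (x i)) {i : ℕ} (hi : i ≤ N) : x i = p^[i] (x 0) := by
  induction i with
  | zero => rfl
  | succ i ih => rw [hx i hi, ih (Nat.le_of_succ_le hi), Function.iterate_succ_apply']

theorem pgm_cgm_bound_general (hL : 0 < L) (hf : IsSmoothConvex L f f') (hφ : ConvexOn ℝ s φ)
    (hp : IsProxGradMap L f f' φ s p) {N : ℕ} (hN : 0 < N) {x : ℕ → E}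
    (hx : ∀ i < N, x (i + 1) = p (x i)) {z : E} (hz : z ∈ s)
    (hle : f z + φ z ≤ f (p (x N)) + φ (p (x N))) {R : ℝ} (hR : ‖x 0 - z‖ ≤ R) :
    (∀ i ≤ N, L * ‖x N - p (x N)‖ ≤ L * ‖x i - p (x i)‖) ∧
      L * ‖x N - p (x N)‖ ≤ L * R / √((N : ℝ) * (N + 1) / 2) := by
  have hiter : ∀ i ≤ N, x i = p^[i] (x 0) := fun i hi => eq_iterate_of_forall_lt hx hi
  constructor
  · intro i hi
    rw [hiter N le_rfl, hiter i hi, ← dist_eq_norm, ← dist_eq_norm]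
    gcongr
    exact antitone_dist_iterate_of_lipschitzWith_one (hp.lipschitzWith_one hL hf hφ) (x 0) hi
  · rw [hiter N le_rfl] at hle ⊢
    rw [mul_div_assoc]
    gcongr
    exact (hp.norm_sub_le_div_sqrt hL hf hφ (x 0) hz hN hle).trans (by gcongr)

end ProximalGradient

/-- for the PGM iterates x_{i+1} = p(x_i), for N ≥ 2 the final composite
gradient mapping norm is the minimum over all iterates and is bounded by
2LR/√((N−1)(N+2)). -/
theorem pgm_cgm_bound
    {E : Type*} [NormedAddCommGroup E] [InnerProductSpace ℝ E]
    (L : ℝ) (hL : 0 < L)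
    (f : E → ℝ) (f' : E → E) (φ : E → ℝ)
    (hf : ConvexOn ℝ Set.univ f)
    (hgrad : ∀ z : E, HasFDerivAt f (innerSL ℝ (f' z)) z)
    (hLip : ∀ u v : E, ‖f' u - f' v‖ ≤ L * ‖u - v‖)
    (hφ : ConvexOn ℝ Set.univ φ)
    (p : E → E)
    (hp : ∀ y : E, IsMinOn
      (fun z => f y + ⟪f' y, z - y⟫ + L / 2 * ‖z - y‖ ^ 2 + φ z) Set.univ (p y))
    (xs : E) (hxs : IsMinOn (fun z => f z + φ z) Set.univ xs)
    (R : ℝ) (hR0 : 0 ≤ R)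
    (N : ℕ) (hN : 2 ≤ N)
    (x : ℕ → E) (hR : ‖x 0 - xs‖ ≤ R)
    (hx : ∀ i < N, x (i + 1) = p (x i)) :
    (∀ i ≤ N, L * ‖x N - p (x N)‖ ≤ L * ‖x i - p (x i)‖) ∧
      L * ‖x N - p (x N)‖ ≤ 2 * L * R / Real.sqrt (((N : ℝ) - 1) * ((N : ℝ) + 2)) := by
  obtain ⟨hmin, hbound⟩ := pgm_cgm_bound_general hL ⟨hf, hgrad, hLip⟩ hφ
    ⟨fun _ => Set.mem_univ _, hp⟩ (by omega) hx (Set.mem_univ xs) (hxs (Set.mem_univ _)) hR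
  refine ⟨hmin, hbound.trans ?_⟩
  rw [mul_assoc 2 L R]
  exact div_sqrt_le_two_mul_div_sqrt (by positivity) (by exact_mod_cast hN)
end

section
/- Fix integers N ≥ 1 and 1 ≤ m ≤ N. Define t_0 = 1 and t_{i+1} = (1 + √(1 + 4t_i²))/2 for 0 ≤ i ≤ m−1, and the FPGM-m iterates by y_0 = x_0 and, for i = 0, …, N−1: x_{i+1} = p(y_i), y_{i+1} = x_{i+1} + ((t_i − 1)/t_{i+1})(x_{i+1} − x_i) if i ≤ m−1 and y_{i+1} = x_{i+1} otherwise. Then min_{0 ≤ i ≤ N} ‖∇̃F(x_i)‖ ≤ ‖∇̃F(x_N)‖ ≤ 2LR / ((m+1)√(N−m+1)). -/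
open scoped RealInnerProductSpace

/-!
Cocoercivity of `f'`, together with the fact that the composite gradient mapping at `q = p y` is no
longer than any subgradient of `F` at `q`, improves the usual proximal gradient inequality by the
term `L / 2 * ‖q - p q‖ ^ 2`:
`F q + L / 2 * ‖q - p q‖ ^ 2 + L * ⟪y - q, z - y⟫ + L / 2 * ‖y - q‖ ^ 2 ≤ F z`.
The FISTA argument therefore controls the augmented value `A q = F q + L / 2 * ‖q - p q‖ ^ 2` in
place of `F q`, and a plain proximal gradient step from `z` decreases `A` by at least
`L * ‖z - p z‖ ^ 2`.

The momentum formula still produces `y_m`, so when `m < N` the point `x_{m+1}` is an accelerated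
iterate and only `N - m - 1` plain steps lead from it to `x_N`. Since
`L * ‖x_N - p x_N‖ ^ 2 ≤ A x_N - F x_*`, summing the decrease gives
`(m + 2) ^ 2 * (N - m) * ‖x_N - p x_N‖ ^ 2 ≤ 2 * R ^ 2`, which suffices because
`N - m + 1 ≤ 2 * (N - m)`. When `N = m`, the accelerated bound at `x_m` is enough on its own.
-/

section Subgradient

variable {E : Type*} [NormedAddCommGroup E] [NormedSpace ℝ E]

/-- `ℓ` is a subgradient of `f` at `x`, in the sense of convex analysis. Subgradients are continuous
linear forms, so that in an inner product space the vector `u` is represented by `innerSL ℝ u`. -/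
def IsSubgradientAt (f : E → ℝ) (ℓ : E →L[ℝ] ℝ) (x : E) : Prop :=
  ∀ z, f x + ℓ (z - x) ≤ f z

theorem IsSubgradientAt.monotone {f : E → ℝ} {ℓ₁ ℓ₂ : E →L[ℝ] ℝ} {x₁ x₂ : E}
    (h₁ : IsSubgradientAt f ℓ₁ x₁) (h₂ : IsSubgradientAt f ℓ₂ x₂) :
    0 ≤ (ℓ₁ - ℓ₂) (x₁ - x₂) := by
  have h₁₂ := h₁ x₂
  have h₂₁ := h₂ x₁
  rw [← neg_sub x₁ x₂, map_neg] at h₁₂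
  rw [sub_apply]
  linarith

theorem isSubgradientAt_of_hasFDerivAt {f : E → ℝ} {f' : E →L[ℝ] ℝ} {x : E}
    (hf : ConvexOn ℝ Set.univ f) (hf' : HasFDerivAt f f' x) : IsSubgradientAt f f' x := by
  intro z
  have hline : HasDerivAt (f ∘ AffineMap.lineMap x z) (f' (z - x)) (0 : ℝ) :=
    HasFDerivAt.comp_hasDerivAt 0 (by simpa using hf') AffineMap.hasDerivAt_lineMap
  have hslope := (hf.comp_affineMap (AffineMap.lineMap x z)).le_slope_of_hasDerivAt
    (Set.mem_univ (0 : ℝ)) (Set.mem_univ 1) one_pos hline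
  simp only [slope_def_field, Function.comp_apply, AffineMap.lineMap_apply_one,
    AffineMap.lineMap_apply_zero, sub_zero, div_one] at hslope
  linarith

theorem isSubgradientAt_neg_of_isMinOn_add {g φ : E → ℝ} {g' : E →L[ℝ] ℝ} {q : E}
    (hφ : ConvexOn ℝ Set.univ φ) (hg : HasFDerivAt g g' q)
    (hq : IsMinOn (fun z => g z + φ z) Set.univ q) : IsSubgradientAt φ (-g') q := by
  intro z
  -- Minimizing `g + φ` amounts to minimizing the differentiable function `(w, r) ↦ g w + r` over
  -- the epigraph of `φ`.
  set epi : Set (E × ℝ) := {w | w.1 ∈ Set.univ ∧ φ w.1 ≤ w.2}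
  have hmin : IsMinOn (fun w : E × ℝ => g w.1 + w.2) epi (q, φ q) := fun w hw =>
    (isMinOn_univ_iff.1 hq w.1).trans (add_le_add_right hw.2 _)
  have hderiv : HasFDerivAt (fun w : E × ℝ => g w.1 + w.2)
      (g'.comp (ContinuousLinearMap.fst ℝ E ℝ) + ContinuousLinearMap.snd ℝ E ℝ) (q, φ q) :=
    (HasFDerivAt.comp (q, φ q) hg hasFDerivAt_fst).add hasFDerivAt_snd
  have hsegment : segment ℝ (q, φ q) (z, φ z) ⊆ epi :=
    hφ.convex_epigraph.segment_subset ⟨Set.mem_univ q, le_rfl⟩ ⟨Set.mem_univ z, le_rfl⟩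
  have hnonneg := hmin.localize.hasFDerivWithinAt_nonneg hderiv.hasFDerivWithinAt
    (sub_mem_posTangentConeAt_of_segment_subset hsegment)
  simp only [Prod.mk_sub_mk, add_apply, ContinuousLinearMap.comp_apply,
    ContinuousLinearMap.coe_fst', ContinuousLinearMap.coe_snd'] at hnonneg
  rw [neg_apply]
  linarith

theorem apply_add_le_of_norm_fderiv_sub_le {f : E → ℝ} {f' : E → E →L[ℝ] ℝ} {L : ℝ} {a : E}
    (hf' : ∀ z, HasFDerivAt f (f' z) z) (hLip : ∀ z, ‖f' z - f' a‖ ≤ L * ‖z - a‖) (d : E) :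
    f (a + d) ≤ f a + f' a d + L / 2 * ‖d‖ ^ 2 := by
  have hpath (s : ℝ) : HasDerivAt (fun s : ℝ => a + s • d) d s := by
    simpa using ((hasDerivAt_id s).smul_const d).const_add a
  have hline (s : ℝ) : HasDerivAt (fun s : ℝ => f (a + s • d)) (f' (a + s • d) d) s :=
    (hf' (a + s • d)).comp_hasDerivAt s (hpath s)
  have hmodel (s : ℝ) :
      HasDerivAt (fun s : ℝ => f a + (s * f' a d + s ^ 2 * (L / 2 * ‖d‖ ^ 2)))
        (f' a d + s * (L * ‖d‖ ^ 2)) s := by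
    refine ((((hasDerivAt_id s).mul_const (f' a d)).add
      ((hasDerivAt_pow 2 s).mul_const (L / 2 * ‖d‖ ^ 2))).const_add (f a)).congr_deriv ?_
    simp only [one_mul, Nat.cast_ofNat, Nat.add_one_sub_one, pow_one, add_right_inj]
    ring
  have hslope {s : ℝ} (hs : 0 ≤ s) : f' (a + s • d) d ≤ f' a d + s * (L * ‖d‖ ^ 2) := by
    rw [← sub_le_iff_le_add']
    calc f' (a + s • d) d - f' a d
      _ ≤ ‖f' (a + s • d) - f' a‖ * ‖d‖ :=
        (le_abs_self _).trans ((f' (a + s • d) - f' a).le_opNorm d)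
      _ ≤ L * ‖a + s • d - a‖ * ‖d‖ := by gcongr; exact hLip _
      _ = s * (L * ‖d‖ ^ 2) := by
        rw [add_sub_cancel_left, norm_smul, Real.norm_of_nonneg hs]
        ring
  have hle := image_le_of_deriv_right_le_deriv_boundary (a := 0) (b := 1)
    (fun s _ => (hline s).continuousAt.continuousWithinAt)
    (fun s _ => (hline s).hasDerivWithinAt) (by simp)
    (fun s _ => (hmodel s).continuousAt.continuousWithinAt)
    (fun s _ => (hmodel s).hasDerivWithinAt) (fun s hs => hslope hs.1)
    (Set.right_mem_Icc.2 zero_le_one)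
  simpa [add_assoc] using hle

end Subgradient

section ProxGrad

variable {E : Type*} [NormedAddCommGroup E] [InnerProductSpace ℝ E]

theorem add_inner_add_sq_norm_gradient_sub_le {L : ℝ} (hL : 0 < L) {f : E → ℝ} {f' : E → E} {a : E}
    (hf : ConvexOn ℝ Set.univ f) (hf' : ∀ z, HasFDerivAt f (innerSL ℝ (f' z)) z)
    (hLip : ∀ z, ‖f' z - f' a‖ ≤ L * ‖z - a‖) (b : E) :
    f b + ⟪f' b, a - b⟫ + 1 / (2 * L) * ‖f' a - f' b‖ ^ 2 ≤ f a := by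
  -- Compare the upper bound at `a` and the lower bound at `b` after a gradient step from `a` for
  -- the function `f - ⟪f' b, ·⟫`.
  set δ := f' a - f' b with hδ
  have hupper := apply_add_le_of_norm_fderiv_sub_le (a := a) hf'
    (fun z => by simpa only [← map_sub, innerSL_apply_norm] using hLip z) (-((1 / L) • δ))
  have hlower := isSubgradientAt_of_hasFDerivAt hf (hf' b) (a + -((1 / L) • δ))
  have hinner : ⟪f' a, δ⟫ - ⟪f' b, δ⟫ = ‖δ‖ ^ 2 := by
    rw [← inner_sub_left, ← hδ, real_inner_self_eq_norm_sq]
  rw [innerSL_apply_apply, inner_neg_right, real_inner_smul_right, norm_neg, norm_smul, mul_pow,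
    Real.norm_eq_abs, sq_abs] at hupper
  rw [innerSL_apply_apply, add_sub_right_comm, inner_add_right, inner_neg_right,
    real_inner_smul_right] at hlower
  have hstep : 1 / L * ⟪f' a, δ⟫ - 1 / L * ⟪f' b, δ⟫ - L / 2 * ((1 / L) ^ 2 * ‖δ‖ ^ 2)
      = 1 / (2 * L) * ‖δ‖ ^ 2 := by
    rw [← mul_sub, hinner]
    field_simp
    ring
  linarith

/-- `p` is the proximal gradient map of `f + φ` with step size `1 / L`, where `f'` is the gradient
of `f`: it selects a minimizer of the quadratic model of `f` at `y` plus `φ`. -/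
def IsProxGradMap_s2 (L : ℝ) (f : E → ℝ) (f' : E → E) (φ : E → ℝ) (p : E → E) : Prop :=
  ∀ y, IsMinOn (fun z => f y + ⟪f' y, z - y⟫ + L / 2 * ‖z - y‖ ^ 2 + φ z) Set.univ (p y)

theorem hasFDerivAt_quadraticModel (c L : ℝ) (g y q : E) :
    HasFDerivAt (fun z => c + ⟪g, z - y⟫ + L / 2 * ‖z - y‖ ^ 2)
      (innerSL ℝ (g + L • (q - y))) q := by
  have hsub : HasFDerivAt (fun z : E => z - y) (ContinuousLinearMap.id ℝ E) q :=
    (hasFDerivAt_id q).sub_const y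
  have hlinear := ((innerSL ℝ g).hasFDerivAt.comp q hsub).const_add c
  refine (hlinear.add (hsub.norm_sq.const_mul (L / 2))).congr_fderiv ?_
  ext v
  simp only [ContinuousLinearMap.comp_id, map_sub, add_apply, coe_innerSL_apply, smul_apply,
    sub_apply, nsmul_eq_mul, Nat.cast_ofNat, smul_eq_mul, map_add, map_smul, add_right_inj]
  ring

theorem IsProxGradMap_s2.isSubgradientAt {L : ℝ} {f : E → ℝ} {f' : E → E} {φ : E → ℝ} {p : E → E}
    (hp : IsProxGradMap_s2 L f f' φ p) (hφ : ConvexOn ℝ Set.univ φ) (y : E) :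
    IsSubgradientAt φ (innerSL ℝ (L • (y - p y) - f' y)) (p y) := by
  have h := isSubgradientAt_neg_of_isMinOn_add hφ
    (hasFDerivAt_quadraticModel (f y) L (f' y) y (p y)) (hp y)
  rwa [← map_neg, show -(f' y + L • (p y - y)) = L • (y - p y) - f' y by module] at h

theorem IsProxGradMap_s2.norm_sub_le_of_isSubgradientAt {L : ℝ} {f : E → ℝ} {f' : E → E} {φ : E → ℝ}
    {p : E → E} (hp : IsProxGradMap_s2 L f f' φ p) (hφ : ConvexOn ℝ Set.univ φ) {u q : E}
    (hu : IsSubgradientAt φ (innerSL ℝ u) q) : L * ‖q - p q‖ ≤ ‖f' q + u‖ := by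
  have hmono := hu.monotone (hp.isSubgradientAt hφ q)
  rw [← map_sub, innerSL_apply_apply,
    show u - (L • (q - p q) - f' q) = f' q + u - L • (q - p q) by abel, inner_sub_left,
    real_inner_smul_left, real_inner_self_eq_norm_sq] at hmono
  rcases (norm_nonneg (q - p q)).eq_or_lt with hzero | hpos
  · simp [← hzero]
  · refine le_of_mul_le_mul_right ?_ hpos
    linarith [real_inner_le_norm (f' q + u) (q - p q)]

/-- The objective `F` augmented by `‖∇̃F(x)‖² / (2L)`, where `∇̃F(x) = L(x - p x)` is the composite
gradient mapping. It replaces `F` as the quantity that the proximal gradient steps decrease. -/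
noncomputable def augmentedValue (L : ℝ) (F : E → ℝ) (p : E → E) (x : E) : ℝ :=
  F x + L / 2 * ‖x - p x‖ ^ 2

/-- The proximal gradient inequality at every point `y`, with the augmented value at `p y` in place
of the `F (p y)` of the classical inequality. It carries everything that the
convergence analysis uses about `p`. -/
def ProxGradInequality (L : ℝ) (F : E → ℝ) (p : E → E) : Prop :=
  ∀ y z, augmentedValue L F p (p y) + L * ⟪y - p y, z - y⟫ + L / 2 * ‖y - p y‖ ^ 2 ≤ F z

theorem IsProxGradMap_s2.proxGradInequality {L : ℝ} (hL : 0 < L) {f : E → ℝ} {f' : E → E} {φ : E → ℝ}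
    {p : E → E} (hp : IsProxGradMap_s2 L f f' φ p) (hf : ConvexOn ℝ Set.univ f)
    (hf' : ∀ z, HasFDerivAt f (innerSL ℝ (f' z)) z)
    (hLip : ∀ u v, ‖f' u - f' v‖ ≤ L * ‖u - v‖) (hφ : ConvexOn ℝ Set.univ φ) :
    ProxGradInequality L (fun z => f z + φ z) p := by
  intro y z
  have hconvex := isSubgradientAt_of_hasFDerivAt hf (hf' y) z
  have hcoercive := add_inner_add_sq_norm_gradient_sub_le (a := y) hL hf hf' (hLip · y) (p y)
  have hprox := hp.isSubgradientAt hφ y z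
  have hmapping := hp.norm_sub_le_of_isSubgradientAt hφ (hp.isSubgradientAt hφ y)
  simp only [augmentedValue]
  set q := p y
  set δ := f' y - f' q with hδ
  have hgain : L / 2 * ‖q - p q‖ ^ 2
      ≤ L / 2 * ‖y - q‖ ^ 2 - ⟪δ, y - q⟫ + 1 / (2 * L) * ‖δ‖ ^ 2 := by
    calc L / 2 * ‖q - p q‖ ^ 2
      _ = 1 / (2 * L) * (L * ‖q - p q‖) ^ 2 := by field_simp
      _ ≤ 1 / (2 * L) * ‖L • (y - q) - δ‖ ^ 2 := by
        rw [show L • (y - q) - δ = f' q + (L • (y - q) - f' y) by rw [hδ]; abel]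
        gcongr
      _ = _ := by
        rw [norm_sub_sq_real, norm_smul, Real.norm_of_nonneg hL.le, real_inner_smul_left,
          real_inner_comm]
        field_simp
  rw [innerSL_apply_apply] at hconvex hprox
  rw [show z - q = (z - y) + (y - q) by abel, inner_sub_left, real_inner_smul_left,
    inner_add_right, inner_add_right, real_inner_self_eq_norm_sq] at hprox
  rw [hδ, inner_sub_left, ← hδ] at hgain
  linarith

end ProxGrad

section NesterovWeights

/-- The recursion `t ↦ (1 + √(1 + 4t²)) / 2` that generates Nesterov's weights. -/
noncomputable def nesterovStep (s : ℝ) : ℝ :=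
  (1 + Real.sqrt (1 + 4 * s ^ 2)) / 2

theorem nesterovStep_mul_sub_one (s : ℝ) : nesterovStep s * (nesterovStep s - 1) = s ^ 2 := by
  have hsq := Real.sq_sqrt (by positivity : (0 : ℝ) ≤ 1 + 4 * s ^ 2)
  unfold nesterovStep
  linarith

theorem add_half_le_nesterovStep (s : ℝ) : s + 1 / 2 ≤ nesterovStep s := by
  have hsqrt : 2 * s ≤ Real.sqrt (1 + 4 * s ^ 2) := Real.le_sqrt_of_sq_le (by linarith)
  unfold nesterovStep
  linarith

theorem add_two_div_two_le_of_nesterovStep {t : ℕ → ℝ} {n : ℕ} (ht0 : t 0 = 1)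
    (ht : ∀ i < n, t (i + 1) = nesterovStep (t i)) {i : ℕ} (hi : i ≤ n) :
    ((i : ℝ) + 2) / 2 ≤ t i := by
  induction i with
  | zero => simp [ht0]
  | succ i ih =>
    rw [ht i hi]
    push_cast
    linarith [ih (by lia), add_half_le_nesterovStep (t i)]

/-- Weights `t 0, …, t n` for which the FISTA potential is nonincreasing. -/
structure IsMomentumWeight (t : ℕ → ℝ) (n : ℕ) : Prop where
  zero : t 0 = 1
  one_le : ∀ i ≤ n, 1 ≤ t i
  mul_sub_one_le : ∀ i < n, t (i + 1) * (t (i + 1) - 1) ≤ t i ^ 2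

theorem isMomentumWeight_of_nesterovStep {t : ℕ → ℝ} {n : ℕ} (ht0 : t 0 = 1)
    (ht : ∀ i < n, t (i + 1) = nesterovStep (t i)) : IsMomentumWeight t n where
  zero := ht0
  one_le i hi := by
    linarith [add_two_div_two_le_of_nesterovStep ht0 ht hi, i.cast_nonneg (α := ℝ)]
  mul_sub_one_le i hi := by rw [ht i hi, nesterovStep_mul_sub_one]

end NesterovWeights

section Acceleration

variable {E : Type*} [NormedAddCommGroup E] [InnerProductSpace ℝ E]

/-- The sequences `x` and `y` perform the accelerated proximal gradient steps (FISTA) `0, …, n` with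
weights `t`. The extrapolated point `y (n + 1)` is left free, so that `x (n + 1)` is the last
accelerated iterate. -/
structure IsFISTA (p : E → E) (t : ℕ → ℝ) (x y : ℕ → E) (n : ℕ) : Prop where
  y_zero : y 0 = x 0
  x_succ : ∀ i ≤ n, x (i + 1) = p (y i)
  y_succ : ∀ i < n, y (i + 1) = x (i + 1) + ((t i - 1) / t (i + 1)) • (x (i + 1) - x i)

namespace ProxGradInequality

variable {L : ℝ} {F : E → ℝ} {p : E → E}

theorem fista_step (h : ProxGradInequality L F p) {τ : ℝ} (hτ : 1 ≤ τ) (x y xs : E) :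
    τ ^ 2 * (augmentedValue L F p (p y) - F xs) + L / 2 * ‖τ • p y - (τ - 1) • x - xs‖ ^ 2
      ≤ τ * (τ - 1) * (F x - F xs) + L / 2 * ‖τ • y - (τ - 1) • x - xs‖ ^ 2 := by
  have hx := mul_le_mul_of_nonneg_left (h y x)
    (mul_nonneg (zero_le_one.trans hτ) (sub_nonneg.2 hτ))
  have hxs := mul_le_mul_of_nonneg_left (h y xs) (zero_le_one.trans hτ)
  have hinner : ⟪τ • y - (τ - 1) • x - xs, y - p y⟫
      = -((τ - 1) * ⟪y - p y, x - y⟫ + ⟪y - p y, xs - y⟫) := by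
    rw [show τ • y - (τ - 1) • x - xs = -((τ - 1) • (x - y) + (xs - y)) by module, inner_neg_left,
      inner_add_left, real_inner_smul_left, real_inner_comm, real_inner_comm (y - p y) (xs - y)]
  rw [show τ • p y - (τ - 1) • x - xs = (τ • y - (τ - 1) • x - xs) - τ • (y - p y) by module,
    norm_sub_sq_real _ (τ • (y - p y)), real_inner_smul_right, hinner, norm_smul, mul_pow,
    Real.norm_eq_abs, sq_abs]
  linarith

theorem fista_potential_le (h : ProxGradInequality L F p) (hL : 0 ≤ L) {xs : E}
    (hxs : IsMinOn F Set.univ xs) {t : ℕ → ℝ} {x y : ℕ → E} {n : ℕ} (ht : IsMomentumWeight t n)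
    (hxy : IsFISTA p t x y n) {i : ℕ} (hi : i ≤ n) :
    t i ^ 2 * (augmentedValue L F p (x (i + 1)) - F xs)
        + L / 2 * ‖t i • x (i + 1) - (t i - 1) • x i - xs‖ ^ 2
      ≤ L / 2 * ‖x 0 - xs‖ ^ 2 := by
  have hstep := h.fista_step (ht.one_le i hi) (x i) (y i) xs
  rw [← hxy.x_succ i hi] at hstep
  refine hstep.trans ?_
  cases i with
  | zero => simp [ht.zero, hxy.y_zero]
  | succ i =>
    refine le_trans ?_ (fista_potential_le h hL hxs ht hxy (Nat.le_of_succ_le hi))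
    have ht_ne : t (i + 1) ≠ 0 := (zero_lt_one.trans_le (ht.one_le _ hi)).ne'
    have hanchor : t (i + 1) • y (i + 1) - (t (i + 1) - 1) • x (i + 1) - xs
        = t i • x (i + 1) - (t i - 1) • x i - xs := by
      rw [hxy.y_succ i hi, smul_add, smul_smul, mul_div_cancel₀ _ ht_ne]
      module
    have hgap : 0 ≤ F (x (i + 1)) - F xs := sub_nonneg.2 (isMinOn_univ_iff.1 hxs _)
    rw [hanchor]
    gcongr
    · exact ht.mul_sub_one_le i hi
    · exact le_add_of_nonneg_right (by positivity)

theorem augmentedValue_apply_add_le (h : ProxGradInequality L F p) (z : E) :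
    augmentedValue L F p (p z) + L * ‖z - p z‖ ^ 2 ≤ augmentedValue L F p z := by
  have hz := h z z
  rw [sub_self, inner_zero_right] at hz
  rw [augmentedValue.eq_def L F p z]
  linarith

theorem norm_apply_sub_le (h : ProxGradInequality L F p) (hL : 0 < L) (z : E) :
    ‖p z - p (p z)‖ ≤ ‖z - p z‖ := by
  have hz := h z (p z)
  rw [augmentedValue, ← neg_sub z (p z), inner_neg_right, real_inner_self_eq_norm_sq] at hz
  refine (pow_le_pow_iff_left₀ (norm_nonneg _) (norm_nonneg _) two_ne_zero).1 ?_
  refine le_of_mul_le_mul_left ?_ (half_pos hL)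
  linarith

theorem mul_sq_norm_sub_le (h : ProxGradInequality L F p) (hL : 0 ≤ L) {xs : E}
    (hxs : IsMinOn F Set.univ xs) (z : E) :
    L * ‖z - p z‖ ^ 2 ≤ augmentedValue L F p z - F xs := by
  have hmin : F xs ≤ augmentedValue L F p (p z) :=
    (isMinOn_univ_iff.1 hxs (p z)).trans (le_add_of_nonneg_right (by positivity))
  linarith [h.augmentedValue_apply_add_le z]

theorem augmentedValue_iterate_add_le (h : ProxGradInequality L F p) (hL : 0 < L) (z : E) (k : ℕ) :
    augmentedValue L F p (p^[k] z) + k * (L * ‖p^[k] z - p (p^[k] z)‖ ^ 2)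
      ≤ augmentedValue L F p z := by
  induction k with
  | zero => simp
  | succ k ih =>
    rw [Function.iterate_succ_apply']
    set w := p^[k] z
    calc augmentedValue L F p (p w) + ↑(k + 1) * (L * ‖p w - p (p w)‖ ^ 2)
      _ ≤ augmentedValue L F p (p w) + ↑(k + 1) * (L * ‖w - p w‖ ^ 2) := by
        gcongr
        exact h.norm_apply_sub_le hL w
      _ = (augmentedValue L F p (p w) + L * ‖w - p w‖ ^ 2) + k * (L * ‖w - p w‖ ^ 2) := by
        push_cast
        ring
      _ ≤ augmentedValue L F p w + k * (L * ‖w - p w‖ ^ 2) := by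
        gcongr
        exact h.augmentedValue_apply_add_le w
      _ ≤ augmentedValue L F p z := ih

theorem sq_norm_sub_iterate_le (h : ProxGradInequality L F p) (hL : 0 < L) {xs : E}
    (hxs : IsMinOn F Set.univ xs) {t : ℕ → ℝ} {x y : ℕ → E} {n : ℕ} (ht : IsMomentumWeight t n)
    (hxy : IsFISTA p t x y n) (k : ℕ) :
    t n ^ 2 * (k + 1) * ‖p^[k] (x (n + 1)) - p (p^[k] (x (n + 1)))‖ ^ 2
      ≤ ‖x 0 - xs‖ ^ 2 / 2 := by
  have hfista := h.fista_potential_le hL.le hxs ht hxy le_rfl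
  have hplain := h.augmentedValue_iterate_add_le hL (x (n + 1)) k
  have hlast := h.mul_sq_norm_sub_le hL.le hxs (p^[k] (x (n + 1)))
  set D := ‖p^[k] (x (n + 1)) - p (p^[k] (x (n + 1)))‖ ^ 2
  have hgap : (k + 1) * (L * D) ≤ augmentedValue L F p (x (n + 1)) - F xs := by linarith
  refine le_of_mul_le_mul_left ?_ hL
  calc L * (t n ^ 2 * (k + 1) * D)
    _ = t n ^ 2 * ((k + 1) * (L * D)) := by ring
    _ ≤ t n ^ 2 * (augmentedValue L F p (x (n + 1)) - F xs) := by gcongr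
    _ ≤ L / 2 * ‖x 0 - xs‖ ^ 2 := (le_add_of_nonneg_right (by positivity)).trans hfista
    _ = L * (‖x 0 - xs‖ ^ 2 / 2) := by ring

theorem sq_norm_sub_iterate_le_of_nesterovStep (h : ProxGradInequality L F p) (hL : 0 < L) {xs : E}
    (hxs : IsMinOn F Set.univ xs) {t : ℕ → ℝ} {x y : ℕ → E} {n : ℕ} (ht0 : t 0 = 1)
    (ht : ∀ i < n, t (i + 1) = nesterovStep (t i)) (hxy : IsFISTA p t x y n) (k : ℕ) :
    ((n : ℝ) + 2) ^ 2 * (k + 1) * ‖p^[k] (x (n + 1)) - p (p^[k] (x (n + 1)))‖ ^ 2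
      ≤ 2 * ‖x 0 - xs‖ ^ 2 := by
  have hbound := h.sq_norm_sub_iterate_le hL hxs (isMomentumWeight_of_nesterovStep ht0 ht) hxy k
  have htn := add_two_div_two_le_of_nesterovStep ht0 ht le_rfl
  set D := ‖p^[k] (x (n + 1)) - p (p^[k] (x (n + 1)))‖ ^ 2
  calc ((n : ℝ) + 2) ^ 2 * (k + 1) * D
    _ = 4 * ((((n : ℝ) + 2) / 2) ^ 2 * (k + 1) * D) := by ring
    _ ≤ 4 * (t n ^ 2 * (k + 1) * D) := by gcongr
    _ ≤ 4 * (‖x 0 - xs‖ ^ 2 / 2) := by gcongr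
    _ = 2 * ‖x 0 - xs‖ ^ 2 := by ring

end ProxGradInequality

end Acceleration

theorem eq_iterate_of_succ_eq {α : Type*} {p : α → α} {x : ℕ → α} {a k : ℕ}
    (h : ∀ i < k, x (a + i + 1) = p (x (a + i))) : x (a + k) = p^[k] (x a) := by
  induction k with
  | zero => rfl
  | succ k ih =>
    rw [Function.iterate_succ_apply', ← ih fun i hi => h i (by lia)]
    exact h k k.lt_succ_self

/-- In a run of FPGM-m of length `N`, `n` is the last accelerated step and `k` plain ones follow. -/
theorem exists_last_accelerated_step {N m : ℕ} (hm : 1 ≤ m) (hmN : m ≤ N) :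
    ∃ n k : ℕ, N = n + 1 + k ∧ n ≤ m ∧ (k = 0 ∨ n = m) ∧
      ((m : ℝ) + 1) ^ 2 * ((N : ℝ) - m + 1) ≤ 2 * (((n : ℝ) + 2) ^ 2 * (k + 1)) := by
  rcases hmN.eq_or_lt with rfl | hlt
  · obtain ⟨n, rfl⟩ := Nat.exists_eq_add_of_le' hm
    refine ⟨n, 0, rfl, n.le_succ, .inl rfl, ?_⟩
    push_cast
    nlinarith [sq_nonneg ((n : ℝ) + 2)]
  · obtain ⟨k, rfl⟩ := Nat.exists_eq_add_of_le (Nat.succ_le_of_lt hlt)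
    refine ⟨m, k, rfl, le_rfl, .inr rfl, ?_⟩
    calc ((m : ℝ) + 1) ^ 2 * (↑(m + 1 + k) - m + 1)
      _ = ((m : ℝ) + 1) ^ 2 * (k + 2) := by push_cast; ring
      _ ≤ ((m : ℝ) + 2) ^ 2 * (2 * (k + 1)) := by
        gcongr <;> linarith [k.cast_nonneg (α := ℝ)]
      _ = _ := by ring

theorem le_div_mul_sqrt_of_sq_mul_sq_le {a b c d : ℝ} (ha : 0 < a) (hb : 0 ≤ b) (hc : 0 < c)
    (h : a ^ 2 * c * d ^ 2 ≤ b ^ 2) : d ≤ b / (a * Real.sqrt c) := by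
  rw [le_div_iff₀ (by positivity)]
  refine le_of_sq_le_sq ?_ hb
  rw [mul_pow, mul_pow, Real.sq_sqrt hc.le]
  linarith

/-- FPGM-m satisfies
min_{0≤i≤N} ‖∇̃F(x_i)‖ ≤ ‖∇̃F(x_N)‖ ≤ 2LR/((m+1)√(N−m+1)). -/
theorem fpgm_m_cgm_bound
    {E : Type*} [NormedAddCommGroup E] [InnerProductSpace ℝ E]
    (L : ℝ) (hL : 0 < L)
    (f : E → ℝ) (f' : E → E) (φ : E → ℝ)
    (hf : ConvexOn ℝ Set.univ f)
    (hgrad : ∀ z : E, HasFDerivAt f (innerSL ℝ (f' z)) z)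
    (hLip : ∀ u v : E, ‖f' u - f' v‖ ≤ L * ‖u - v‖)
    (hφ : ConvexOn ℝ Set.univ φ)
    (p : E → E)
    (hp : ∀ y : E, IsMinOn
      (fun z => f y + ⟪f' y, z - y⟫ + L / 2 * ‖z - y‖ ^ 2 + φ z) Set.univ (p y))
    (xs : E) (hxs : IsMinOn (fun z => f z + φ z) Set.univ xs)
    (R : ℝ) (hR0 : 0 ≤ R)
    (N m : ℕ) (hm1 : 1 ≤ m) (hmN : m ≤ N)
    (t : ℕ → ℝ) (ht0 : t 0 = 1)
    (ht : ∀ i < m, t (i + 1) = (1 + Real.sqrt (1 + 4 * t i ^ 2)) / 2)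
    (x y : ℕ → E) (hR : ‖x 0 - xs‖ ≤ R)
    (hy0 : y 0 = x 0)
    (hx : ∀ i < N, x (i + 1) = p (y i))
    (hy1 : ∀ i < N, i < m →
      y (i + 1) = x (i + 1) + ((t i - 1) / t (i + 1)) • (x (i + 1) - x i))
    (hy2 : ∀ i < N, m ≤ i → y (i + 1) = x (i + 1)) :
    (Finset.range (N + 1)).inf' (Finset.nonempty_range_iff.mpr (Nat.succ_ne_zero N))
        (fun i => L * ‖x i - p (x i)‖) ≤ L * ‖x N - p (x N)‖ ∧
      L * ‖x N - p (x N)‖ ≤ 2 * L * R / (((m : ℝ) + 1) * Real.sqrt ((N : ℝ) - m + 1)) := by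
  refine ⟨Finset.inf'_le _ (Finset.self_mem_range_succ N), ?_⟩
  have hNm : (0 : ℝ) < (N : ℝ) - m + 1 := by linarith [(Nat.cast_le (α := ℝ)).2 hmN]
  obtain ⟨n, k, rfl, hnm, hplain, hcount⟩ := exists_last_accelerated_step hm1 hmN
  have hfista : IsFISTA p t x y n :=
    ⟨hy0, fun i hi => hx i (by lia), fun i hi => hy1 i (by lia) (by lia)⟩
  have hiterate : x (n + 1 + k) = p^[k] (x (n + 1)) := eq_iterate_of_succ_eq fun i hi => by
    rw [hx (n + 1 + i) (by lia), add_right_comm n 1 i, hy2 (n + i) (by lia) (by lia)]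
  have hineq : ProxGradInequality L (fun z => f z + φ z) p :=
    IsProxGradMap_s2.proxGradInequality hL hp hf hgrad hLip hφ
  have hbound := hineq.sq_norm_sub_iterate_le_of_nesterovStep hL hxs ht0
    (fun i hi => ht i (by lia)) hfista k
  rw [mul_assoc 2 L R, mul_left_comm 2 L R, mul_div_assoc, hiterate]
  refine mul_le_mul_of_nonneg_left
    (le_div_mul_sqrt_of_sq_mul_sq_le (by positivity) (by positivity) hNm ?_) hL.le
  set D := ‖p^[k] (x (n + 1)) - p (p^[k] (x (n + 1)))‖ ^ 2
  calc ((m : ℝ) + 1) ^ 2 * (↑(n + 1 + k) - m + 1) * D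
    _ ≤ 2 * (((n : ℝ) + 2) ^ 2 * (k + 1)) * D := by gcongr
    _ ≤ 2 * (2 * ‖x 0 - xs‖ ^ 2) := by rw [mul_assoc 2]; gcongr
    _ ≤ 2 * (2 * R ^ 2) := by gcongr
    _ = (2 * R) ^ 2 := by ring
end

section
/- For every x ∈ E, the vector g := L(x − p(x)) − f'(x) is a subgradient of φ at p(x), i.e., φ(z) ≥ φ(p(x)) + ⟪g, z − p(x)⟫ for all z ∈ E; moreover the subgradient f'(p(x)) + g of F at p(x) satisfies ‖f'(p(x)) + g‖ ≤ 2L‖x − p(x)‖, i.e., its norm is at most twice the norm of the composite gradient mapping ∇̃F(x). -/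
open scoped RealInnerProductSpace

/-!
The point `p x` minimizes a smooth quadratic model plus the convex function `φ`. Along a segment
from `p x` to `z`, replacing `φ` by its chord keeps the minimum at `p x`, so the derivative of the
resulting function of one real variable is nonnegative there. This says that minus the gradient of
the model at `p x`, namely `L • (x - p x) - f' x`, is a subgradient of `φ` at `p x`.
Adding `f' (p x)` leaves `(f' (p x) - f' x) + L • (x - p x)`, and the Lipschitz bound on `f'`
controls the first term by the norm of the second.
-/

section FirstOrderCondition

variable {E : Type*} [NormedAddCommGroup E] [NormedSpace ℝ E]

/-- The continuous linear functional `ℓ` is a subgradient at `q` of the function `φ` restricted to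
`s`. In an inner product space a subgradient vector `v` is encoded as `innerSL ℝ v`; the set `s`
plays the role of the effective domain of an extended-valued `φ`. -/
def IsSubgradientOn (φ : E → ℝ) (s : Set E) (ℓ : E →L[ℝ] ℝ) (q : E) : Prop :=
  ∀ z ∈ s, φ q + ℓ (z - q) ≤ φ z

theorem hasDerivWithinAt_nonneg_of_isMinOn_Icc {h : ℝ → ℝ} {h' a b : ℝ} (hab : a < b)
    (hmin : IsMinOn h (Set.Icc a b) a) (hderiv : HasDerivWithinAt h h' (Set.Icc a b) a) :
    0 ≤ h' := by
  have hdir : b - a ∈ posTangentConeAt (Set.Icc a b) a :=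
    sub_mem_posTangentConeAt_of_segment_subset (segment_eq_Icc hab.le).subset
  have hnonneg : 0 ≤ (b - a) * h' := by
    simpa using hmin.localize.hasFDerivWithinAt_nonneg hderiv.hasFDerivWithinAt hdir
  exact nonneg_of_mul_nonneg_right hnonneg (sub_pos.2 hab)

theorem isMinOn_add_chord {s : Set E} {g φ : E → ℝ} {q z : E} (hφ : ConvexOn ℝ s φ)
    (hmin : IsMinOn (fun y => g y + φ y) s q) (hq : q ∈ s) (hz : z ∈ s) :
    IsMinOn (fun t : ℝ => g (AffineMap.lineMap q z t) + AffineMap.lineMap (φ q) (φ z) t)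
      (Set.Icc 0 1) 0 := by
  refine isMinOn_iff.2 fun t ht => ?_
  have hmem : AffineMap.lineMap q z t ∈ s := hφ.1.lineMap_mem hq hz ht
  have hchord : φ (AffineMap.lineMap q z t) ≤ AffineMap.lineMap (φ q) (φ z) t := by
    simpa only [AffineMap.lineMap_apply_module] using
      hφ.2 hq hz (sub_nonneg.2 ht.2) ht.1 (sub_add_cancel 1 t)
  calc g (AffineMap.lineMap q z (0 : ℝ)) + AffineMap.lineMap (φ q) (φ z) (0 : ℝ)
      = g q + φ q := by simp only [AffineMap.lineMap_apply_zero]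
    _ ≤ g (AffineMap.lineMap q z t) + φ (AffineMap.lineMap q z t) := isMinOn_iff.1 hmin _ hmem
    _ ≤ g (AffineMap.lineMap q z t) + AffineMap.lineMap (φ q) (φ z) t := by gcongr

theorem isSubgradientOn_neg_of_isMinOn_add {s : Set E} {g φ : E → ℝ} {g' : E →L[ℝ] ℝ} {q : E}
    (hφ : ConvexOn ℝ s φ) (hmin : IsMinOn (fun y => g y + φ y) s q) (hq : q ∈ s)
    (hg : HasFDerivWithinAt g g' s q) : IsSubgradientOn φ s (-g') q := by
  intro z hz
  have hmaps : Set.MapsTo (AffineMap.lineMap q z) (Set.Icc (0 : ℝ) 1) s :=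
    fun _ ht => hφ.1.lineMap_mem hq hz ht
  have hderiv : HasDerivWithinAt
      (fun t : ℝ => g (AffineMap.lineMap q z t) + AffineMap.lineMap (φ q) (φ z) t)
      (g' (z - q) + (φ z - φ q)) (Set.Icc 0 1) 0 :=
    (hg.comp_hasDerivWithinAt_of_eq 0 AffineMap.hasDerivWithinAt_lineMap hmaps
      (AffineMap.lineMap_apply_zero q z).symm).add AffineMap.hasDerivWithinAt_lineMap
  have hnonneg : 0 ≤ g' (z - q) + (φ z - φ q) :=
    hasDerivWithinAt_nonneg_of_isMinOn_Icc zero_lt_one (isMinOn_add_chord hφ hmin hq hz) hderiv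
  rw [neg_apply]
  linarith

end FirstOrderCondition

section ProximalStep

variable {E : Type*} [NormedAddCommGroup E] [InnerProductSpace ℝ E]

/-- The quadratic model with value `c`, gradient `v` and curvature `L` at `x`. The proximal gradient
step from `x` minimizes `quadraticModel (f x) (f' x) L x + φ`. -/
noncomputable def quadraticModel (c : ℝ) (v : E) (L : ℝ) (x z : E) : ℝ :=
  c + ⟪v, z - x⟫ + L / 2 * ‖z - x‖ ^ 2

theorem hasFDerivAt_quadraticModel_s4 (c : ℝ) (v : E) (L : ℝ) (x z : E) :
    HasFDerivAt (quadraticModel c v L x) (innerSL ℝ (v + L • (z - x))) z := by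
  have hsub : HasFDerivAt (fun y => y - x) (ContinuousLinearMap.id ℝ E) z :=
    (hasFDerivAt_id z).sub_const x
  have hlin : HasFDerivAt (fun y => ⟪v, y - x⟫) (innerSL ℝ v) z :=
    (innerSL ℝ v).hasFDerivAt.comp z hsub
  refine ((hlin.const_add c).add (hsub.norm_sq.const_mul (L / 2))).congr_fderiv ?_
  ext y
  simp
  ring

theorem isSubgradientOn_of_isMinOn_quadraticModel_add {s : Set E} {φ : E → ℝ} {c L : ℝ}
    {v x q : E} (hφ : ConvexOn ℝ s φ)
    (hmin : IsMinOn (fun z => quadraticModel c v L x z + φ z) s q) (hq : q ∈ s) :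
    IsSubgradientOn φ s (innerSL ℝ (L • (x - q) - v)) q := by
  have hgrad : L • (x - q) - v = -(v + L • (q - x)) := by module
  rw [hgrad, map_neg]
  exact isSubgradientOn_neg_of_isMinOn_add hφ hmin hq
    (hasFDerivAt_quadraticModel_s4 c v L x q).hasFDerivWithinAt

theorem norm_add_smul_sub_sub_le {L : ℝ} {x q u v : E} (huv : ‖u - v‖ ≤ L * ‖q - x‖) :
    ‖u + (L • (x - q) - v)‖ ≤ 2 * (L * ‖x - q‖) := by
  rw [norm_sub_rev q x] at huv
  have hstep : ‖L • (x - q)‖ = L * ‖x - q‖ := by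
    rw [← abs_of_nonneg ((norm_nonneg _).trans huv), abs_mul, abs_norm, norm_smul, Real.norm_eq_abs]
  calc ‖u + (L • (x - q) - v)‖ = ‖(u - v) + L • (x - q)‖ := by congr 1; abel
    _ ≤ ‖u - v‖ + ‖L • (x - q)‖ := norm_add_le _ _
    _ ≤ L * ‖x - q‖ + L * ‖x - q‖ := add_le_add huv hstep.le
    _ = 2 * (L * ‖x - q‖) := (two_mul _).symm

theorem subgradient_norm_le_two_cgm_general {L : ℝ} {f : E → ℝ} {f' : E → E} {φ : E → ℝ}
    {s : Set E} (hgrad : ∀ z : E, HasFDerivAt f (innerSL ℝ (f' z)) z)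
    (hLip : ∀ u v : E, ‖f' u - f' v‖ ≤ L * ‖u - v‖) (hφ : ConvexOn ℝ s φ) {p : E → E}
    (hps : ∀ y : E, p y ∈ s)
    (hp : ∀ y : E, IsMinOn (fun z => quadraticModel (f y) (f' y) L y z + φ z) s (p y)) (x : E) :
    IsSubgradientOn φ s (innerSL ℝ (L • (x - p x) - f' x)) (p x) ∧
      ‖f' (p x) + (L • (x - p x) - f' x)‖ ≤ 2 * (L * ‖x - p x‖) :=
  ⟨isSubgradientOn_of_isMinOn_quadraticModel_add hφ (hp x) (hps x),
    norm_add_smul_sub_sub_le (hLip (p x) x)⟩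

end ProximalStep

/-- g := L(x − p(x)) − f'(x) is a subgradient of φ at p(x), and the
subgradient f'(p(x)) + g of F at p(x) has norm at most twice the norm of the
composite gradient mapping, i.e. at most 2L‖x − p(x)‖. -/
theorem subgradient_norm_le_two_cgm
    {E : Type*} [NormedAddCommGroup E] [InnerProductSpace ℝ E]
    (L : ℝ) (hL : 0 < L)
    (f : E → ℝ) (f' : E → E) (φ : E → ℝ)
    (hf : ConvexOn ℝ Set.univ f)
    (hgrad : ∀ z : E, HasFDerivAt f (innerSL ℝ (f' z)) z)
    (hLip : ∀ u v : E, ‖f' u - f' v‖ ≤ L * ‖u - v‖)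
    (hφ : ConvexOn ℝ Set.univ φ)
    (p : E → E)
    (hp : ∀ y : E, IsMinOn
      (fun z => f y + ⟪f' y, z - y⟫ + L / 2 * ‖z - y‖ ^ 2 + φ z) Set.univ (p y))
    (x : E) :
    (∀ z : E, φ (p x) + ⟪L • (x - p x) - f' x, z - p x⟫ ≤ φ z) ∧
      ‖f' (p x) + (L • (x - p x) - f' x)‖ ≤ 2 * (L * ‖x - p x‖) := by
  obtain ⟨hsub, hnorm⟩ :=
    subgradient_norm_le_two_cgm_general hgrad hLip hφ (fun y => Set.mem_univ (p y)) hp x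
  exact ⟨fun z => hsub z (Set.mem_univ z), hnorm⟩
end

section
/- Let the fixed-step first-order method (FO) with step coefficients h be defined by y'_0 = x_0, x'_{k+1} = p(y'_k), and y'_{i+1} = y'_i + Σ_{k=0}^{i} h_{i+1,k}(x'_{k+1} − y'_k) for i ≥ 0. Then the FO sequence coincides with the GFPGM sequence: x'_i = x_i and y'_i = y_i for all i. -/
open scoped RealInnerProductSpace

/-!
Both methods are instances of linear coupling: `y i` lies on the line through `x i` and
`z i = x 0 + ∑ k < i, t k • (x (k + 1) - y k)`, at parameter `t i / T i`. For GFPGM, solving this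
relation for `z i` turns the momentum formula into the relation at `i + 1`. For FO, unrolling the
recursion gives `y i - x 0 = ∑ k < i, (∑ j = k+1..i, h j k) • (x (k + 1) - y k)`, so the factors
`t k - ∑ j, h j k` in the definition of `h` add up to `z i - y i`. Linear coupling determines
`y i` from `x i` and `z i`, hence the whole run from `x 0` and the maps producing `x (i + 1)`
from `y i`.
-/

open AffineMap (lineMap)

section LinearCoupling

variable {R E : Type*} [Ring R] [AddCommGroup E] [Module R E]

/-- The mirror-descent iterate `z i` of the linear-coupling view of acceleration: the initial point
moved by the steps `x (k + 1) - y k` accumulated with weights `t k`, instead of each being applied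
to the current `y k`. -/
def mirrorIterate (t : ℕ → R) (x y : ℕ → E) (i : ℕ) : E :=
  x 0 + ∑ k ∈ Finset.range i, t k • (x (k + 1) - y k)

/-- Linear coupling of the iterates `x i` with the mirror iterates `z i`. The parameter `τ i` is the
weight of `z i`, so that `y i = (1 - τ i) • x i + τ i • z i`. -/
def IsLinearCoupling (t τ : ℕ → R) (x y : ℕ → E) : Prop :=
  ∀ i, y i = lineMap (x i) (mirrorIterate t x y i) (τ i)

@[simp]
theorem mirrorIterate_zero (t : ℕ → R) (x y : ℕ → E) : mirrorIterate t x y 0 = x 0 := by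
  simp [mirrorIterate]

theorem mirrorIterate_succ (t : ℕ → R) (x y : ℕ → E) (i : ℕ) :
    mirrorIterate t x y (i + 1) = mirrorIterate t x y i + t i • (x (i + 1) - y i) := by
  simp only [mirrorIterate, Finset.sum_range_succ, add_assoc]

theorem IsLinearCoupling.eq_and_eq {t τ : ℕ → R} {x y x' y' : ℕ → E}
    (hxy : IsLinearCoupling t τ x y) (hxy' : IsLinearCoupling t τ x' y') (p : ℕ → E → E)
    (hx : ∀ i, x (i + 1) = p i (y i)) (hx' : ∀ i, x' (i + 1) = p i (y' i)) (h0 : x' 0 = x 0)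
    (i : ℕ) : x' i = x i ∧ y' i = y i := by
  have y_eq {i : ℕ} (hxi : x' i = x i) (hzi : mirrorIterate t x' y' i = mirrorIterate t x y i) :
      y' i = y i := by
    rw [hxy i, hxy' i, hxi, hzi]
  suffices x' i = x i ∧ mirrorIterate t x' y' i = mirrorIterate t x y i from
    ⟨this.1, y_eq this.1 this.2⟩
  induction i with
  | zero => simp [h0]
  | succ i ih =>
    have hyi : y' i = y i := y_eq ih.1 ih.2
    have hxi : x' (i + 1) = x (i + 1) := by rw [hx, hx', hyi]
    exact ⟨hxi, by rw [mirrorIterate_succ, mirrorIterate_succ, ih.2, hxi, hyi]⟩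

end LinearCoupling

theorem isLinearCoupling_of_gfpgm {K E : Type*} [Field K] [AddCommGroup E] [Module K E]
    {t T : ℕ → K} (ht : ∀ i, t i ≠ 0) (hT : ∀ i, T i ≠ 0) {x y : ℕ → E} (hy0 : y 0 = x 0)
    (hy : ∀ i, y (i + 1) = x (i + 1)
        + ((T i - t i) * t (i + 1) / (t i * T (i + 1))) • (x (i + 1) - x i)
        + ((t i ^ 2 - T i) * t (i + 1) / (t i * T (i + 1))) • (x (i + 1) - y i)) :
    IsLinearCoupling t (fun i ↦ t i / T i) x y := by
  intro i
  induction i with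
  | zero => simp [hy0]
  | succ i ih =>
    have hti := ht i
    have hTi' := hT (i + 1)
    have mirror_eq : mirrorIterate t x y i = lineMap (x i) (y i) (T i / t i) := by
      rw [ih, AffineMap.lineMap_lineMap_right, div_mul_div_cancel₀ hti, div_self (hT i),
        AffineMap.lineMap_apply_one]
    rw [mirrorIterate_succ, mirror_eq, hy]
    simp only [AffineMap.lineMap_apply_module]
    match_scalars <;> field_simp <;> ring

theorem eq_add_sum_Icc_smul_of_fixedStep {R M : Type*} [Semiring R] [AddCommMonoid M] [Module R M]
    {h : ℕ → ℕ → R} {y d : ℕ → M}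
    (hy : ∀ i, y (i + 1) = y i + ∑ k ∈ Finset.range (i + 1), h (i + 1) k • d k) (i : ℕ) :
    y i = y 0 + ∑ k ∈ Finset.range i, (∑ j ∈ Finset.Icc (k + 1) i, h j k) • d k := by
  induction i with
  | zero => simp
  | succ i ih =>
    have split_last : ∀ k ∈ Finset.range (i + 1),
        (∑ j ∈ Finset.Icc (k + 1) (i + 1), h j k) • d k
          = (∑ j ∈ Finset.Icc (k + 1) i, h j k) • d k + h (i + 1) k • d k := fun k hk ↦ by
      rw [Finset.sum_Icc_succ_top (Nat.succ_le_succ (Finset.mem_range_succ_iff.1 hk)), add_smul]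
    have drop_empty : ∑ k ∈ Finset.range (i + 1), (∑ j ∈ Finset.Icc (k + 1) i, h j k) • d k
        = ∑ k ∈ Finset.range i, (∑ j ∈ Finset.Icc (k + 1) i, h j k) • d k := by
      simp [Finset.sum_range_succ]
    rw [Finset.sum_congr rfl split_last, Finset.sum_add_distrib, drop_empty, ← add_assoc, ← ih, hy]

section FixedStep

variable {R E : Type*} [CommRing R] [AddCommGroup E] [Module R E] {t τ : ℕ → R} {h : ℕ → ℕ → R}
  {x y : ℕ → E}

theorem sum_fixedStep_smul_eq_smul_mirrorIterate_sub
    (hoff : ∀ i, ∀ k < i, h (i + 1) k = τ (i + 1) * (t k - ∑ j ∈ Finset.Icc (k + 1) i, h j k))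
    (hy0 : y 0 = x 0)
    (hy : ∀ i, y (i + 1) = y i + ∑ k ∈ Finset.range (i + 1), h (i + 1) k • (x (k + 1) - y k))
    (i : ℕ) :
    ∑ k ∈ Finset.range i, h (i + 1) k • (x (k + 1) - y k)
      = τ (i + 1) • (mirrorIterate t x y i - y i) := by
  calc ∑ k ∈ Finset.range i, h (i + 1) k • (x (k + 1) - y k)
      = ∑ k ∈ Finset.range i, τ (i + 1) • (t k • (x (k + 1) - y k)
          - (∑ j ∈ Finset.Icc (k + 1) i, h j k) • (x (k + 1) - y k)) :=
        Finset.sum_congr rfl fun k hk ↦ by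
          rw [hoff i k (Finset.mem_range.1 hk), mul_smul, sub_smul]
    _ = τ (i + 1) • (∑ k ∈ Finset.range i, t k • (x (k + 1) - y k)
          - ∑ k ∈ Finset.range i, (∑ j ∈ Finset.Icc (k + 1) i, h j k) • (x (k + 1) - y k)) := by
        rw [← Finset.smul_sum, Finset.sum_sub_distrib]
    _ = τ (i + 1) • (mirrorIterate t x y i - y i) := by
        rw [eq_add_sum_Icc_smul_of_fixedStep hy i, hy0, mirrorIterate, add_sub_add_left_eq_sub]

theorem isLinearCoupling_of_fixedStep
    (hdiag : ∀ i, h (i + 1) i = 1 + (t i - 1) * τ (i + 1))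
    (hoff : ∀ i, ∀ k < i, h (i + 1) k = τ (i + 1) * (t k - ∑ j ∈ Finset.Icc (k + 1) i, h j k))
    (hy0 : y 0 = x 0)
    (hy : ∀ i, y (i + 1) = y i + ∑ k ∈ Finset.range (i + 1), h (i + 1) k • (x (k + 1) - y k)) :
    IsLinearCoupling t τ x y := by
  rintro (_ | i)
  · simp [hy0]
  · rw [hy, Finset.sum_range_succ, sum_fixedStep_smul_eq_smul_mirrorIterate_sub hoff hy0 hy, hdiag,
      mirrorIterate_succ, AffineMap.lineMap_apply_module]
    module

end FixedStep

theorem fo_eq_gfpgm_general {K E : Type*} [Field K] [AddCommGroup E] [Module K E]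
    (p : ℕ → E → E) (t T : ℕ → K) (ht : ∀ i, t i ≠ 0) (hT : ∀ i, T i ≠ 0)
    (x y : ℕ → E) (hy0 : y 0 = x 0) (hx : ∀ i, x (i + 1) = p i (y i))
    (hy : ∀ i, y (i + 1) = x (i + 1)
        + ((T i - t i) * t (i + 1) / (t i * T (i + 1))) • (x (i + 1) - x i)
        + ((t i ^ 2 - T i) * t (i + 1) / (t i * T (i + 1))) • (x (i + 1) - y i))
    (h : ℕ → ℕ → K)
    (hdiag : ∀ i, h (i + 1) i = 1 + (t i - 1) * t (i + 1) / T (i + 1))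
    (hoff : ∀ i, ∀ k < i, h (i + 1) k
        = t (i + 1) / T (i + 1) * (t k - ∑ j ∈ Finset.Icc (k + 1) i, h j k))
    (x' y' : ℕ → E) (hx'0 : x' 0 = x 0) (hy'0 : y' 0 = x 0)
    (hx' : ∀ k, x' (k + 1) = p k (y' k))
    (hy' : ∀ i, y' (i + 1)
        = y' i + ∑ k ∈ Finset.range (i + 1), h (i + 1) k • (x' (k + 1) - y' k)) :
    ∀ i, x' i = x i ∧ y' i = y i := by
  have gfpgm : IsLinearCoupling t (fun i ↦ t i / T i) x y := isLinearCoupling_of_gfpgm ht hT hy0 hy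
  have fo : IsLinearCoupling t (fun i ↦ t i / T i) x' y' :=
    isLinearCoupling_of_fixedStep (fun i ↦ by rw [hdiag, mul_div_assoc]) hoff
      (hy'0.trans hx'0.symm) hy'
  exact gfpgm.eq_and_eq fo p hx hx' hx'0

/-- the fixed-step first-order method (FO) with the GFPGM step
coefficients h produces exactly the GFPGM iterates. -/
theorem fo_eq_gfpgm
    {E : Type*} [NormedAddCommGroup E] [InnerProductSpace ℝ E]
    (L : ℝ) (hL : 0 < L)
    (f : E → ℝ) (f' : E → E) (φ : E → ℝ)
    (hf : ConvexOn ℝ Set.univ f)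
    (hgrad : ∀ z : E, HasFDerivAt f (innerSL ℝ (f' z)) z)
    (hLip : ∀ u v : E, ‖f' u - f' v‖ ≤ L * ‖u - v‖)
    (hφ : ConvexOn ℝ Set.univ φ)
    (p : E → E)
    (hp : ∀ y : E, IsMinOn
      (fun z => f y + ⟪f' y, z - y⟫ + L / 2 * ‖z - y‖ ^ 2 + φ z) Set.univ (p y))
    (t T : ℕ → ℝ) (ht0 : t 0 = 1) (htpos : ∀ i, 0 < t i)
    (hT : ∀ i, T i = ∑ l ∈ Finset.range (i + 1), t l)
    (htT : ∀ i, t i ^ 2 ≤ T i)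
    (x y : ℕ → E)
    (hy0 : y 0 = x 0)
    (hx : ∀ i, x (i + 1) = p (y i))
    (hy : ∀ i, y (i + 1) = x (i + 1)
        + ((T i - t i) * t (i + 1) / (t i * T (i + 1))) • (x (i + 1) - x i)
        + ((t i ^ 2 - T i) * t (i + 1) / (t i * T (i + 1))) • (x (i + 1) - y i))
    (h : ℕ → ℕ → ℝ)
    (hdiag : ∀ i, h (i + 1) i = 1 + (t i - 1) * t (i + 1) / T (i + 1))
    (hoff : ∀ i, ∀ k < i, h (i + 1) k
        = t (i + 1) / T (i + 1) * (t k - ∑ j ∈ Finset.Icc (k + 1) i, h j k))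
    (x' y' : ℕ → E)
    (hx'0 : x' 0 = x 0) (hy'0 : y' 0 = x 0)
    (hx' : ∀ k, x' (k + 1) = p (y' k))
    (hy' : ∀ i, y' (i + 1) = y' i + ∑ k ∈ Finset.range (i + 1), h (i + 1) k • (x' (k + 1) - y' k)) :
    ∀ i, x' i = x i ∧ y' i = y i := by
  have hT0 (i : ℕ) : T i ≠ 0 := hT i ▸ (Finset.sum_pos (fun l _ ↦ htpos l) (by simp)).ne'
  exact fo_eq_gfpgm_general (fun _ ↦ p) t T (fun i ↦ (htpos i).ne') hT0 x y hy0 hx hy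
    h hdiag hoff x' y' hx'0 hy'0 hx' hy'
end

section
/- Define the GFPGM' iterates by y'_0 = x_0 and, for i ≥ 0: x'_{i+1} = p(y'_i), z_{i+1} = x_0 − Σ_{k=0}^{i} t_k (y'_k − p(y'_k)), and y'_{i+1} = (1 − t_{i+1}/T_{i+1}) x'_{i+1} + (t_{i+1}/T_{i+1}) z_{i+1}. Then the GFPGM' sequence coincides with the GFPGM sequence: x'_i = x_i and y'_i = y_i for all i. -/
open scoped RealInnerProductSpace

/-! Extend the auxiliary sequence of GFPGM' by `z 0 = x 0`. Then
`z (i + 1) = z i - t i • (y i - x (i + 1))`, and `y i` is the average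
`(1 - t i / T i) • x i + (t i / T i) • z i` for every `i`, including `i = 0`, where all three points
agree. Solving the average for `z i` writes `z (i + 1) - x (i + 1)` as a combination of
`x (i + 1) - x i` and `x (i + 1) - y i`, and its multiple by `t (i + 1) / T (i + 1)` is the momentum
of GFPGM. -/

section GFPGM

variable {K E : Type*} [Field K] [AddCommGroup E] [Module K E]

/-- The iterates of the generalized fast proximal gradient method in momentum form, for an arbitrary
iteration map `p` (the proximal gradient map in the method itself) and arbitrary normalizers `T`
(there, the partial sums of the weights `t`). -/
structure IsGFPGM (p : E → E) (t T : ℕ → K) (x y : ℕ → E) : Prop where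
  y_zero : y 0 = x 0
  x_succ : ∀ i, x (i + 1) = p (y i)
  y_succ : ∀ i, y (i + 1) = x (i + 1)
    + ((T i - t i) * t (i + 1) / (t i * T (i + 1))) • (x (i + 1) - x i)
    + ((t i ^ 2 - T i) * t (i + 1) / (t i * T (i + 1))) • (x (i + 1) - y i)

/-- The iterates of the same method in Nesterov's form, where `y` averages `x` with an auxiliary
sequence `z` accumulating the weighted steps. The value `z 0` is left unconstrained. -/
structure IsGFPGM' (p : E → E) (t T : ℕ → K) (x y z : ℕ → E) : Prop where
  y_zero : y 0 = x 0
  x_succ : ∀ i, x (i + 1) = p (y i)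
  z_succ : ∀ i, z (i + 1) = x 0 - ∑ k ∈ Finset.range (i + 1), t k • (y k - p (y k))
  y_succ : ∀ i, y (i + 1) = (1 - t (i + 1) / T (i + 1)) • x (i + 1)
    + (t (i + 1) / T (i + 1)) • z (i + 1)

theorem eq_add_div_smul_sub_of_average {t T : K} (ht : t ≠ 0) (hT : T ≠ 0) {x y z : E}
    (hy : y = (1 - t / T) • x + (t / T) • z) : z = x + (T / t) • (y - x) := by
  have hyx : y - x = (t / T) • (z - x) := by
    rw [hy]
    module
  rw [hyx, smul_smul, div_mul_div_cancel₀' hT, div_self ht, one_smul, add_sub_cancel]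

theorem average_step_sub_eq_momentum {t T : K} (ht : t ≠ 0) (hT : T ≠ 0) {x y z : E}
    (hy : y = (1 - t / T) • x + (t / T) • z) (u : E) :
    z - t • (y - u) - u = ((T - t) / t) • (u - x) + ((t ^ 2 - T) / t) • (u - y) := by
  rw [eq_add_div_smul_sub_of_average ht hT hy]
  match_scalars <;> field_simp <;> ring

namespace IsGFPGM'

/-- The auxiliary sequence of GFPGM' started at index `0`, where its value is the initial point
`x₀`. -/
def auxPoint (p : E → E) (t : ℕ → K) (x₀ : E) (y : ℕ → E) (i : ℕ) : E :=
  x₀ - ∑ k ∈ Finset.range i, t k • (y k - p (y k))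

theorem auxPoint_zero (p : E → E) (t : ℕ → K) (x₀ : E) (y : ℕ → E) :
    auxPoint p t x₀ y 0 = x₀ := by
  simp [auxPoint]

theorem auxPoint_succ (p : E → E) (t : ℕ → K) (x₀ : E) (y : ℕ → E) (i : ℕ) :
    auxPoint p t x₀ y (i + 1) = auxPoint p t x₀ y i - t i • (y i - p (y i)) := by
  rw [auxPoint, auxPoint, Finset.sum_range_succ, sub_add_eq_sub_sub]

variable {p : E → E} {t T : ℕ → K} {x y z : ℕ → E}

theorem y_eq_average (h : IsGFPGM' p t T x y z) (i : ℕ) :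
    y i = (1 - t i / T i) • x i + (t i / T i) • auxPoint p t (x 0) y i := by
  cases i with
  | zero => rw [auxPoint_zero, h.y_zero, ← add_smul, sub_add_cancel, one_smul]
  | succ i => rw [h.y_succ, h.z_succ, auxPoint]

theorem isGFPGM (h : IsGFPGM' p t T x y z) (ht : ∀ i, t i ≠ 0) (hT : ∀ i, T i ≠ 0) :
    IsGFPGM p t T x y where
  y_zero := h.y_zero
  x_succ := h.x_succ
  y_succ i := by
    have hz : auxPoint p t (x 0) y (i + 1) - x (i + 1)
        = ((T i - t i) / t i) • (x (i + 1) - x i)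
          + ((t i ^ 2 - T i) / t i) • (x (i + 1) - y i) := by
      rw [auxPoint_succ, ← h.x_succ]
      exact average_step_sub_eq_momentum (ht i) (hT i) (h.y_eq_average i) _
    have hy : y (i + 1)
        = x (i + 1) + (t (i + 1) / T (i + 1)) • (auxPoint p t (x 0) y (i + 1) - x (i + 1)) := by
      rw [h.y_eq_average (i + 1)]
      module
    rw [hy, hz, mul_div_mul_comm, mul_div_mul_comm]
    module

end IsGFPGM'

theorem IsGFPGM.eq_of_x_zero_eq {p : E → E} {t T : ℕ → K} {x y x' y' : ℕ → E}
    (h : IsGFPGM p t T x y) (h' : IsGFPGM p t T x' y') (h₀ : x' 0 = x 0) (i : ℕ) :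
    x' i = x i ∧ y' i = y i := by
  induction i with
  | zero => exact ⟨h₀, by rw [h'.y_zero, h.y_zero, h₀]⟩
  | succ i ih =>
    obtain ⟨hx, hy⟩ := ih
    have hx_succ : x' (i + 1) = x (i + 1) := by rw [h'.x_succ, h.x_succ, hy]
    exact ⟨hx_succ, by rw [h'.y_succ, h.y_succ, hx_succ, hx, hy]⟩

theorem gfpgm'_eq_gfpgm_general {p : E → E} {t T : ℕ → K} {x y x' y' z : ℕ → E}
    (ht : ∀ i, t i ≠ 0) (hT : ∀ i, T i ≠ 0) (h : IsGFPGM p t T x y)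
    (h' : IsGFPGM' p t T x' y' z) (h₀ : x' 0 = x 0) (i : ℕ) :
    x' i = x i ∧ y' i = y i :=
  h.eq_of_x_zero_eq (h'.isGFPGM ht hT) h₀ i

end GFPGM

/-- the GFPGM' iterates (Nesterov-style form with the auxiliary sequence z)
coincide with the GFPGM iterates. -/
theorem gfpgm'_eq_gfpgm
    {E : Type*} [NormedAddCommGroup E] [InnerProductSpace ℝ E]
    (L : ℝ) (hL : 0 < L)
    (f : E → ℝ) (f' : E → E) (φ : E → ℝ)
    (hf : ConvexOn ℝ Set.univ f)
    (hgrad : ∀ z : E, HasFDerivAt f (innerSL ℝ (f' z)) z)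
    (hLip : ∀ u v : E, ‖f' u - f' v‖ ≤ L * ‖u - v‖)
    (hφ : ConvexOn ℝ Set.univ φ)
    (p : E → E)
    (hp : ∀ y : E, IsMinOn
      (fun z => f y + ⟪f' y, z - y⟫ + L / 2 * ‖z - y‖ ^ 2 + φ z) Set.univ (p y))
    (t T : ℕ → ℝ) (ht0 : t 0 = 1) (htpos : ∀ i, 0 < t i)
    (hT : ∀ i, T i = ∑ l ∈ Finset.range (i + 1), t l)
    (htT : ∀ i, t i ^ 2 ≤ T i)
    (x y : ℕ → E)
    (hy0 : y 0 = x 0)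
    (hx : ∀ i, x (i + 1) = p (y i))
    (hy : ∀ i, y (i + 1) = x (i + 1)
        + ((T i - t i) * t (i + 1) / (t i * T (i + 1))) • (x (i + 1) - x i)
        + ((t i ^ 2 - T i) * t (i + 1) / (t i * T (i + 1))) • (x (i + 1) - y i))
    (x' y' z : ℕ → E)
    (hx'0 : x' 0 = x 0) (hy'0 : y' 0 = x 0)
    (hx' : ∀ i, x' (i + 1) = p (y' i))
    (hz : ∀ i, z (i + 1) = x 0 - ∑ k ∈ Finset.range (i + 1), t k • (y' k - p (y' k)))
    (hy' : ∀ i, y' (i + 1) = (1 - t (i + 1) / T (i + 1)) • x' (i + 1)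
        + (t (i + 1) / T (i + 1)) • z (i + 1)) :
    ∀ i, x' i = x i ∧ y' i = y i := by
  have hTpos (i : ℕ) : 0 < T i := by
    rw [hT]
    exact Finset.sum_pos (fun l _ => htpos l) Finset.nonempty_range_add_one
  exact gfpgm'_eq_gfpgm_general (fun i => (htpos i).ne') (fun i => (hTpos i).ne') ⟨hy0, hx, hy⟩
    ⟨hy'0.trans hx'0.symm, hx', by rwa [hx'0], hy'⟩ hx'0
end
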